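/- arXiv:1610.01916 — 2 statements merged into one kernel-verified Lean document; each statement's English description precedes it below -/
import Mathlib

section
/- Blow-up characterization of Gevrey asymptotics (Proposition 7.5): Let d ≥ 2, s > 0, P holomorphic on D(0;ρ_0) ⊆ ℂ^d with P(0) = 0 and P not identically zero, Π = Π_P(α,β;ρ_0), and f : Π → ℂ holomorphic. Then f admits a P-s-Gevrey asymptotic expansion in the estimate sense on Π if and only if for every ξ ∈ ℂ ∪ {∞} there exist r_ξ > 0 with b_ξ(D(0;r_ξ)) ⊆ D(0;ρ_0), a sequence (g_n^ξ) of bounded holomorphic functions on D(0;r_ξ), and constants C_ξ, A_ξ > 0 such that sup_{D(0;r_ξ)}|g_n^ξ| ≤ C_ξ·A_ξ^n·Γ(sn+1) for all n and |f(b_ξ(v)) − g_n^ξ(v)| ≤ C_ξ·A_ξ^n·Γ(sn+1)·|P(b_ξ(v))|^n for every n ∈ ℕ and every v in the (P∘b_ξ)-sector Π_{P∘b_ξ}(α,β;r_ξ) with b_ξ(v) ∈ Π. -/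
open Set Complex

noncomputable section

/-- Open polydisk of radius `r` centered at `0` in `ℂ^d`. -/
def polydisk (d : ℕ) (r : ℝ) : Set (Fin d → ℂ) :=
  {x | ∀ j, ‖x j‖ < r}

/-- The `P`-sector `Π_P(a,b;r)`. -/
def PSector (d : ℕ) (P : (Fin d → ℂ) → ℂ) (a b r : ℝ) : Set (Fin d → ℂ) :=
  {x | (∀ j, 0 < ‖x j‖ ∧ ‖x j‖ < r) ∧ P x ≠ 0 ∧
    ∃ θ ∈ Set.Ioo a b, P x = (‖P x‖ : ℂ) * Complex.exp (θ * Complex.I)}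

/-- Blow-up chart at `ξ ∈ ℂ`: `b_ξ(v) = (v₂, (ξ+v₁)·v₂, v₃, …)` (in dimension `d+2`). -/
def blowUpC (d : ℕ) (ξ : ℂ) (v : Fin (d + 2) → ℂ) : Fin (d + 2) → ℂ :=
  fun i => if i = 0 then v 1 else if i = 1 then (ξ + v 0) * v 1 else v i

/-- Blow-up chart at `∞`: `b_∞(v) = (v₁·v₂, v₂, v₃, …)` (in dimension `d+2`). -/
def blowUpInf (d : ℕ) (v : Fin (d + 2) → ℂ) : Fin (d + 2) → ℂ :=
  fun i => if i = 0 then v 0 * v 1 else v i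

/-!
Pulling an expansion back along a chart is immediate, so the content lies in gluing. Everything is
transported to the chart `b₀`, in which the exceptional divisor is the `v₁`-line, a copy of `ℂ`
that the chart `b_∞` completes to `ℙ¹`. If `g n` and `g' n` are two local approximations of order
`n`, then `g n - g' n` is `O(Pⁿ)` on the sector, and restricting to one-variable slices shows that
it is divisible by `Pⁿ`, with geometric bounds on the quotient. On an overlap of charts these
quotients form an additive Cousin problem along the divisor. It is solved with bounds by a Cauchy
transform smeared against the `∂̄`-derivative of a cutoff function (Cauchy–Pompeiu), so the loss
is a constant independent of `n`. Correcting the `n`-th approximations by `Pⁿ` times the solution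
preserves all estimates and makes them agree. By compactness of `ℙ¹` finitely many gluings produce
an expansion near the whole divisor; it descends to `x₁ ≠ 0` near the origin, and Riemann's
extension theorem removes the hyperplane `x₁ = 0`.
-/

open Metric Filter MeasureTheory Topology Function
open scoped Real

section Osgood

variable {K : Type*} [TopologicalSpace K] [CompactSpace K]
  {F : Type*} [NormedAddCommGroup F] [NormedSpace ℂ F]

theorem differentiableOn_continuousMap_of_eval [CompleteSpace F] {φ : ℂ → C(K, F)}
    {U : Set ℂ} (hU : IsOpen U) (hφ : ContinuousOn φ U)
    (heval : ∀ k, DifferentiableOn ℂ (fun z => φ z k) U) :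
    DifferentiableOn ℂ φ U := by
  intro c hc
  obtain ⟨R, hR, hRU⟩ := nhds_basis_closedBall.mem_iff.1 (hU.mem_nhds hc)
  lift R to NNReal using hR.le
  have hintegrable : CircleIntegrable φ c R :=
    (hφ.mono (sphere_subset_closedBall.trans hRU)).circleIntegrable R.2
  have cauchy_formula : ∀ w ∈ ball c R,
      (2 * π * I : ℂ)⁻¹ • ∮ z in C(c, R), (z - w)⁻¹ • φ z = φ w := by
    intro w hw
    ext k
    have hkernel : CircleIntegrable (fun z => (z - w)⁻¹ • φ z) c R := by
      refine ContinuousOn.circleIntegrable R.2 (ContinuousOn.fun_smul ?_ (hφ.mono ?_))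
      · exact ContinuousOn.inv₀ (by fun_prop) fun z hz hzw =>
          (mem_ball.1 hw).ne (by rw [← sub_eq_zero.1 hzw, mem_sphere.1 hz])
      · exact sphere_subset_closedBall.trans hRU
    have hcomm : (∮ z in C(c, R), (z - w)⁻¹ • φ z) k = ∮ z in C(c, R), (z - w)⁻¹ • φ z k := by
      simpa [circleIntegral] using
        ((ContinuousMap.evalCLM ℂ k).intervalIntegral_comp_comm hkernel.out).symm
    rw [ContinuousMap.smul_apply, hcomm,
      ((heval k).mono hRU).circleIntegral_sub_inv_smul hw, inv_smul_smul₀ two_pi_I_ne_zero]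
  have hpow := hasFPowerSeriesOn_cauchy_integral hintegrable hR
  refine (hpow.analyticAt.differentiableAt.congr_of_eventuallyEq ?_).differentiableWithinAt
  filter_upwards [ball_mem_nhds c hR] with w hw using (cauchy_formula w hw).symm

section Pairing

variable (F) [MeasurableSpace K] [OpensMeasurableSpace K] (μ : Measure K) [IsFiniteMeasure μ]

/-- The integral pairing `(κ, Φ) ↦ ∫ κ Φ dμ` on a compact space, as a continuous bilinear map. -/
def integralPairing : C(K, ℂ) →L[ℂ] C(K, F) →L[ℂ] F :=
  have integrable (κ : C(K, ℂ)) (Φ : C(K, F)) : Integrable (fun k => κ k • Φ k) μ :=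
    (κ.continuous.smul Φ.continuous).integrable_of_hasCompactSupport
      (HasCompactSupport.of_compactSpace _)
  LinearMap.mkContinuous₂
    (LinearMap.mk₂ ℂ (fun κ Φ => ∫ k, κ k • Φ k ∂μ)
      (fun κ κ' Φ => by
        simp only [ContinuousMap.add_apply, add_smul]
        exact integral_add (integrable κ Φ) (integrable κ' Φ))
      (fun c κ Φ => by
        simp only [ContinuousMap.smul_apply, smul_assoc]
        exact integral_smul _ _)
      (fun κ Φ Φ' => by
        simp only [ContinuousMap.add_apply, smul_add]
        exact integral_add (integrable κ Φ) (integrable κ Φ'))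
      (fun c κ Φ => by
        simp only [ContinuousMap.smul_apply, smul_comm _ c]
        exact integral_smul _ _))
    (μ.real univ) fun κ Φ => by
      refine (norm_integral_le_of_norm_le_const (C := ‖κ‖ * ‖Φ‖) (.of_forall fun k => ?_)).trans_eq
        (by ring)
      rw [norm_smul]
      exact mul_le_mul (κ.norm_coe_le_norm k) (Φ.norm_coe_le_norm k) (norm_nonneg _)
        (norm_nonneg _)

variable {F}

@[simp]
theorem integralPairing_apply (κ : C(K, ℂ)) (Φ : C(K, F)) :
    integralPairing F μ κ Φ = ∫ k, κ k • Φ k ∂μ := rfl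

end Pairing

theorem continuous_section_of_uncurry {T X Y : Type*} [TopologicalSpace T] [TopologicalSpace X]
    [TopologicalSpace Y] {Ψ : T → X → Y} {S : Set T}
    (hΨ : ContinuousOn (uncurry Ψ) (S ×ˢ univ)) {y : T} (hy : y ∈ S) : Continuous (Ψ y) :=
  hΨ.comp_continuous (Continuous.prodMk_right y) fun _ => ⟨hy, mem_univ _⟩

theorem differentiableOn_mkD_of_uncurry [CompleteSpace F] {Ψ : ℂ → K → F} {U : Set ℂ}
    (hU : IsOpen U) (hΨ : ContinuousOn (uncurry Ψ) (U ×ˢ univ))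
    (hdiff : ∀ k, DifferentiableOn ℂ (fun z => Ψ z k) U) :
    DifferentiableOn ℂ (fun z => ContinuousMap.mkD (Ψ z) 0) U :=
  differentiableOn_continuousMap_of_eval hU
    (ContinuousMap.continuousOn_mkD_of_uncurry Ψ 0 hΨ) fun k => (hdiff k).congr fun z hz => by
      rw [ContinuousMap.mkD_apply_of_continuous (continuous_section_of_uncurry hΨ hz)]

theorem isFiniteMeasure_comap_val {X : Type*} [MeasurableSpace X] {μ : Measure X} {S : Set X}
    (hS : MeasurableSet S) (hμS : μ S ≠ ⊤) : IsFiniteMeasure (μ.comap ((↑) : S → X)) :=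
  ⟨by rwa [comap_subtype_coe_apply hS, image_univ, Subtype.range_coe, lt_top_iff_ne_top]⟩

instance isFiniteMeasure_comap_val_Icc (a b : ℝ) :
    IsFiniteMeasure (volume.comap ((↑) : Icc a b → ℝ)) :=
  isFiniteMeasure_comap_val measurableSet_Icc (by simp)

/-- The Cauchy kernel `(2πi)⁻¹ (ζ - t)⁻¹ dζ` of the circle `|ζ - c| = R`, as a continuous function
of the angle; the junk value is `0` when `t` lies on the circle. -/
def cauchyKernel (c : ℂ) (R : ℝ) (t : ℂ) : C(Icc 0 (2 * π), ℂ) :=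
  .mkD (fun θ => (2 * π * I : ℂ)⁻¹ * (deriv (circleMap c R) θ * (circleMap c R θ - t)⁻¹)) 0

theorem continuousOn_cauchyKernel_uncurry (c : ℂ) (R : ℝ) :
    ContinuousOn (uncurry fun (t : ℂ) (θ : Icc 0 (2 * π)) =>
      (2 * π * I : ℂ)⁻¹ * (deriv (circleMap c R) θ * (circleMap c R θ - t)⁻¹))
      (ball c R ×ˢ univ) := by
  simp only [deriv_circleMap, uncurry_def]
  refine continuousOn_const.mul ((Continuous.continuousOn (by fun_prop)).mul
    (ContinuousOn.inv₀ (by fun_prop) fun p hp => ?_))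
  exact sub_ne_zero.2 (circleMap_ne_mem_ball hp.1 _)

theorem analyticAt_cauchyKernel {c t : ℂ} {R : ℝ} (ht : t ∈ ball c R) :
    AnalyticAt ℂ (cauchyKernel c R) t := by
  refine (differentiableOn_mkD_of_uncurry isOpen_ball
    (continuousOn_cauchyKernel_uncurry c R) fun θ => ?_).analyticAt
    (isOpen_ball.mem_nhds ht)
  exact DifferentiableOn.const_mul (DifferentiableOn.const_mul (DifferentiableOn.inv (by fun_prop)
    fun z hz => sub_ne_zero.2 (circleMap_ne_mem_ball hz _)) _) _

theorem integralPairing_cauchyKernel [CompleteSpace F] {c t : ℂ} {R : ℝ} {g : ℂ → F}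
    (hg : DifferentiableOn ℂ g (closedBall c R)) (ht : t ∈ ball c R) {Φ : C(Icc 0 (2 * π), F)}
    (hΦ : ∀ θ, Φ θ = g (circleMap c R θ)) :
    integralPairing F (volume.comap ((↑) : Icc 0 (2 * π) → ℝ)) (cauchyKernel c R t) Φ = g t := by
  have hcont := continuous_section_of_uncurry
    (continuousOn_cauchyKernel_uncurry c R) ht
  have hformula := hg.circleIntegral_sub_inv_smul ht
  rw [circleIntegral, intervalIntegral.integral_of_le Real.two_pi_pos.le,
    ← integral_Icc_eq_integral_Ioc, ← integral_subtype_comap measurableSet_Icc] at hformula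
  rw [eq_comm, ← inv_smul_smul₀ two_pi_I_ne_zero (g t), ← hformula, ← integral_smul,
    integralPairing_apply]
  refine integral_congr_ae (.of_forall fun θ => ?_)
  simp only [cauchyKernel, ContinuousMap.mkD_apply_of_continuous hcont, hΦ, mul_smul]

theorem analyticAt_of_circle_sections [CompleteSpace F] {n : ℕ} {f : (Fin (n + 1) → ℂ) → F}
    {x : Fin (n + 1) → ℂ} {R : ℝ} (hR : 0 < R) {Φ : (Fin n → ℂ) → C(Icc 0 (2 * π), F)}
    (hΦ : AnalyticAt ℂ Φ (Fin.tail x))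
    (hΦf : ∀ᶠ y in 𝓝 (Fin.tail x), (∀ θ, Φ y θ = f (Fin.cons (circleMap (x 0) R θ) y)) ∧
      DifferentiableOn ℂ (fun t => f (Fin.cons t y)) (closedBall (x 0) R)) :
    AnalyticAt ℂ f x := by
  let tailL : (Fin (n + 1) → ℂ) →L[ℂ] (Fin n → ℂ) := .pi fun i => .proj i.succ
  let headL : (Fin (n + 1) → ℂ) →L[ℂ] ℂ := .proj 0
  have htail : AnalyticAt ℂ (Φ ∘ tailL) x := AnalyticAt.comp hΦ (tailL.analyticAt x)
  have hkernel : AnalyticAt ℂ (cauchyKernel (x 0) R ∘ headL) x :=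
    AnalyticAt.comp (analyticAt_cauchyKernel (mem_ball_self hR)) (headL.analyticAt x)
  have hpairing := (integralPairing F (volume.comap ((↑) : Icc 0 (2 * π) → ℝ))).analyticAt_bilinear
    (cauchyKernel (x 0) R (x 0), Φ (Fin.tail x))
  refine (hpairing.comp_of_eq (hkernel.prod htail) rfl).congr ?_
  have hball : ∀ᶠ v in 𝓝 x, v 0 ∈ ball (x 0) R :=
    (continuous_apply 0).continuousAt.eventually (ball_mem_nhds _ hR)
  filter_upwards [hball, tailL.continuous.continuousAt.eventually hΦf] with v hv0 hv
  refine (integralPairing_cauchyKernel hv.2 hv0 hv.1).trans ?_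
  exact congrArg f (Fin.cons_self_tail v)

theorem differentiableAt_mkD_update [CompleteSpace F] {n : ℕ} {Ψ : (Fin n → ℂ) → K → F}
    {Ω : Set (Fin n → ℂ)} (hΩ : IsOpen Ω) (hΨ : ContinuousOn (uncurry Ψ) (Ω ×ˢ univ)) {i : Fin n}
    (hdiff : ∀ k, ∀ y ∈ Ω, DifferentiableAt ℂ (fun z => Ψ (update y i z) k) (y i))
    {x : Fin n → ℂ} (hx : x ∈ Ω) :
    DifferentiableAt ℂ (fun z => ContinuousMap.mkD (Ψ (update x i z)) 0) (x i) := by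
  have hopen : IsOpen {z : ℂ | update x i z ∈ Ω} := hΩ.preimage (by fun_prop)
  refine (differentiableOn_mkD_of_uncurry hopen ?_ fun k z hz => ?_).differentiableAt
    (hopen.mem_nhds (by simpa using hx))
  · exact hΨ.comp (f := fun p : ℂ × K => (update x i p.1, p.2))
      (Continuous.continuousOn (by fun_prop)) fun p hp => ⟨hp.1, hp.2⟩
  · have := hdiff k _ hz
    simp only [update_self, update_idem] at this
    exact this.differentiableWithinAt

theorem cons_mem_closedBall {n : ℕ} {x : Fin (n + 1) → ℂ} {R : ℝ} {t : ℂ} {y : Fin n → ℂ}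
    (ht : t ∈ closedBall (x 0) R) (hy : y ∈ closedBall (Fin.tail x) R) :
    (Fin.cons t y : Fin (n + 1) → ℂ) ∈ closedBall x R :=
  mem_closedBall.2 ((dist_pi_le_iff (dist_nonneg.trans (mem_closedBall.1 ht))).2
    (Fin.cases ht fun i => (dist_le_pi_dist y (Fin.tail x) i).trans hy))

/-- **Osgood's lemma.** The induction on the dimension replaces `F` by the Banach space of
continuous functions on a circle in the first variable, so it needs all targets at once. -/
theorem analyticOnNhd_of_continuousOn_of_differentiableAt_update {n : ℕ} :
    ∀ {F : Type*} [NormedAddCommGroup F] [NormedSpace ℂ F] [CompleteSpace F]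
      {Ω : Set (Fin n → ℂ)} {f : (Fin n → ℂ) → F}, IsOpen Ω → ContinuousOn f Ω →
      (∀ x ∈ Ω, ∀ i, DifferentiableAt ℂ (fun z => f (update x i z)) (x i)) →
      AnalyticOnNhd ℂ f Ω := by
  induction n with
  | zero =>
    intro F _ _ _ Ω f _ _ _ x _
    exact analyticAt_const.congr (.of_forall fun y => congrArg f (Subsingleton.elim x y))
  | succ n ih =>
    intro F _ _ _ Ω f hΩ hf hsep x hx
    obtain ⟨R, hR, hRΩ⟩ := nhds_basis_closedBall.mem_iff.1 (hΩ.mem_nhds hx)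
    have cons_mem {t : ℂ} {y : Fin n → ℂ} (ht : t ∈ closedBall (x 0) R)
        (hy : y ∈ ball (Fin.tail x) R) : (Fin.cons t y : Fin (n + 1) → ℂ) ∈ Ω :=
      hRΩ (cons_mem_closedBall ht (ball_subset_closedBall hy))
    have circle_mem (θ : Icc 0 (2 * π)) : circleMap (x 0) R θ ∈ closedBall (x 0) R :=
      circleMap_mem_closedBall _ hR.le _
    have hcont : ContinuousOn (uncurry fun (y : Fin n → ℂ) (θ : Icc 0 (2 * π)) =>
        f (Fin.cons (circleMap (x 0) R θ) y)) (ball (Fin.tail x) R ×ˢ univ) :=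
      hf.comp (Continuous.continuousOn (by fun_prop)) fun p hp => cons_mem (circle_mem _) hp.1
    refine analyticAt_of_circle_sections hR (Φ := fun y => .mkD (fun θ : Icc 0 (2 * π) =>
        f (Fin.cons (circleMap (x 0) R θ) y)) 0) ?_ ?_
    · refine ih isOpen_ball (ContinuousMap.continuousOn_mkD_of_uncurry _ 0 hcont)
        (fun y hy i => differentiableAt_mkD_update isOpen_ball hcont (fun θ y hy => ?_) hy) _
        (mem_ball_self hR)
      simpa only [Fin.cons_succ, ← Fin.cons_update] using
        hsep _ (cons_mem (circle_mem θ) hy) i.succ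
    · filter_upwards [ball_mem_nhds _ hR] with y hy
      refine ⟨fun θ => ContinuousMap.mkD_apply_of_continuous
        (continuous_section_of_uncurry hcont hy), fun t ht => ?_⟩
      have := hsep _ (cons_mem ht hy) 0
      simp only [Fin.cons_zero, Fin.update_cons_zero] at this
      exact this.differentiableWithinAt

theorem differentiableAt_comp_update {n : ℕ} {Ω : Set (Fin n → ℂ)} {f : (Fin n → ℂ) → F}
    (hΩ : IsOpen Ω) (hf : DifferentiableOn ℂ f Ω) {x : Fin n → ℂ} (hx : x ∈ Ω) (i : Fin n) :
    DifferentiableAt ℂ (fun z => f (update x i z)) (x i) :=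
  ((update_eq_self i x).symm ▸ hf.differentiableAt (hΩ.mem_nhds hx) :
    DifferentiableAt ℂ f (update x i (x i))).comp (x i)
    (hasFDerivAt_update x (x i)).differentiableAt

theorem analyticOnNhd_of_differentiableOn {n : ℕ} [CompleteSpace F] {Ω : Set (Fin n → ℂ)}
    {f : (Fin n → ℂ) → F} (hΩ : IsOpen Ω) (hf : DifferentiableOn ℂ f Ω) : AnalyticOnNhd ℂ f Ω :=
  analyticOnNhd_of_continuousOn_of_differentiableAt_update hΩ hf.continuousOn fun _ hx =>
    differentiableAt_comp_update hΩ hf hx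

theorem analyticOnNhd_mkD_of_uncurry [CompleteSpace F] {n : ℕ} {Ψ : (Fin n → ℂ) → K → F}
    {Ω : Set (Fin n → ℂ)} (hΩ : IsOpen Ω) (hΨ : ContinuousOn (uncurry Ψ) (Ω ×ˢ univ))
    (hdiff : ∀ k, DifferentiableOn ℂ (fun y => Ψ y k) Ω) :
    AnalyticOnNhd ℂ (fun y => ContinuousMap.mkD (Ψ y) 0) Ω :=
  analyticOnNhd_of_continuousOn_of_differentiableAt_update hΩ
    (ContinuousMap.continuousOn_mkD_of_uncurry Ψ 0 hΨ) fun _ hx i =>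
    differentiableAt_mkD_update hΩ hΨ (fun k _ hy => differentiableAt_comp_update hΩ (hdiff k) hy i)
      hx

end Osgood

section ParametricIntegrals

variable {n : ℕ} {F : Type*} [NormedAddCommGroup F] [NormedSpace ℂ F] [CompleteSpace F]
  {Ω : Set (Fin n → ℂ)}

theorem analyticOnNhd_setIntegral {X : Type*} [TopologicalSpace X] [T2Space X]
    [MeasurableSpace X] [OpensMeasurableSpace X] {μ : Measure X} [IsFiniteMeasureOnCompacts μ]
    {K : Set X} (hK : IsCompact K) {Ψ : (Fin n → ℂ) → X → F} (hΩ : IsOpen Ω)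
    (hΨ : ContinuousOn (uncurry Ψ) (Ω ×ˢ K))
    (hdiff : ∀ k ∈ K, DifferentiableOn ℂ (fun y => Ψ y k) Ω) :
    AnalyticOnNhd ℂ (fun y => ∫ k in K, Ψ y k ∂μ) Ω := by
  have := isFiniteMeasure_comap_val hK.measurableSet (hK.measure_ne_top (μ := μ))
  have := isCompact_iff_compactSpace.1 hK
  have hcont : ContinuousOn (uncurry fun (y : Fin n → ℂ) (k : K) => Ψ y k) (Ω ×ˢ univ) :=
    hΨ.comp (f := fun p : (Fin n → ℂ) × K => (p.1, (p.2 : X)))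
      (Continuous.continuousOn (by fun_prop)) fun p hp => ⟨hp.1, p.2.2⟩
  have hanalytic := analyticOnNhd_mkD_of_uncurry hΩ hcont fun k => hdiff k k.2
  intro y hy
  refine (((integralPairing F (μ.comap ((↑) : K → X)) 1).analyticAt _).comp
    (hanalytic y hy)).congr ?_
  filter_upwards [hΩ.mem_nhds hy] with z hz
  simp [ContinuousMap.mkD_apply_of_continuous (continuous_section_of_uncurry hcont hz),
    ← integral_subtype_comap hK.measurableSet]

theorem analyticOnNhd_circleIntegral {c : ℂ} {R : ℝ} (hR : 0 ≤ R) {Ψ : (Fin n → ℂ) → ℂ → F}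
    (hΩ : IsOpen Ω) (hΨ : ContinuousOn (uncurry Ψ) (Ω ×ˢ sphere c R))
    (hdiff : ∀ ζ ∈ sphere c R, DifferentiableOn ℂ (fun y => Ψ y ζ) Ω) :
    AnalyticOnNhd ℂ (fun y => ∮ ζ in C(c, R), Ψ y ζ) Ω := by
  have hcircle (θ : ℝ) : circleMap c R θ ∈ sphere c R := circleMap_mem_sphere c hR θ
  simp only [circleIntegral, intervalIntegral.integral_of_le Real.two_pi_pos.le,
    ← integral_Icc_eq_integral_Ioc, deriv_circleMap]
  refine analyticOnNhd_setIntegral isCompact_Icc hΩ ?_ fun θ _ =>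
    (hdiff _ (hcircle θ)).const_smul _
  refine ContinuousOn.smul (Continuous.continuousOn (by fun_prop))
    (hΨ.comp (f := fun p : (Fin n → ℂ) × ℝ => (p.1, circleMap c R p.2))
      (Continuous.continuousOn (by fun_prop)) fun p hp => ⟨hp.1, hcircle _⟩)

end ParametricIntegrals

section CauchyPompeiu

/-- The Wirtinger derivative `∂F/∂ζ̄ = (∂₁F + i ∂₂F) / 2`. -/
def dbar (F : ℂ → ℂ) (ζ : ℂ) : ℂ := (fderiv ℝ F ζ 1 + I * fderiv ℝ F ζ I) / 2

theorem continuous_dbar {F : ℂ → ℂ} (hF : ContDiff ℝ 1 F) : Continuous (dbar F) := by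
  have := hF.continuous_fderiv one_ne_zero
  unfold dbar
  fun_prop

theorem support_dbar_subset (F : ℂ → ℂ) : support (dbar F) ⊆ tsupport F := by
  intro ζ hζ
  refine support_fderiv_subset ℝ fun h => hζ ?_
  simp [dbar, h]

theorem dbar_mul_of_differentiableAt {ψ q : ℂ → ℂ} {ζ : ℂ} (hψ : DifferentiableAt ℝ ψ ζ)
    (hq : DifferentiableAt ℂ q ζ) : dbar (fun z => ψ z * q z) ζ = dbar ψ ζ * q ζ := by
  have hqI : fderiv ℝ q ζ I = I * fderiv ℝ q ζ 1 := by
    rw [hq.fderiv_restrictScalars ℝ]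
    simp
  simp only [dbar, fderiv_fun_mul hψ (hq.restrictScalars ℝ), add_apply, smul_apply, smul_eq_mul,
    hqI]
  linear_combination (1 / 2) * ψ ζ * fderiv ℝ q ζ 1 * I_sq

theorem dbar_eq_polar (F : ℂ → ℂ) (ζ : ℂ) (θ : ℝ) :
    dbar F ζ = exp (θ * I) * ((fderiv ℝ F ζ (exp (θ * I)) +
      I * fderiv ℝ F ζ (I * exp (θ * I))) / 2) := by
  have hexp : exp (θ * I) = Real.cos θ • (1 : ℂ) + Real.sin θ • I := by
    simp [exp_mul_I]
  have hIexp : I * exp (θ * I) = Real.cos θ • I + Real.sin θ • (-1 : ℂ) := by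
    rw [hexp]
    simp only [real_smul]
    linear_combination (Real.sin θ : ℂ) * I_sq
  rw [hIexp, hexp]
  simp only [map_add, map_smul, map_neg]
  simp only [real_smul, dbar]
  have hsq : (Real.cos θ : ℂ) ^ 2 + (Real.sin θ : ℂ) ^ 2 = 1 := by
    exact_mod_cast Real.cos_sq_add_sin_sq θ
  linear_combination (-(fderiv ℝ F ζ 1 + I * fderiv ℝ F ζ I) / 2) * hsq +
    (fderiv ℝ F ζ 1 * Real.sin θ - fderiv ℝ F ζ I * Real.cos θ) * Real.sin θ / 2 * I_sq

theorem integral_fderiv_radial {F : ℂ → ℂ} (hF : ContDiff ℝ 1 F) {R : ℝ}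
    (hFR : ∀ ζ, R ≤ ‖ζ‖ → F ζ = 0) {e : ℂ} (he : ‖e‖ = 1) :
    ∫ r in 0..R, fderiv ℝ F (r * e) e = -F 0 := by
  have hderiv (r : ℝ) : HasDerivAt (fun r : ℝ => F (r * e)) (fderiv ℝ F (r * e) e) r := by
    have hlin : HasDerivAt (fun r : ℝ => (r : ℂ) * e) e r := by
      simpa using ofRealCLM.hasDerivAt.mul_const e
    exact (hF.differentiable one_ne_zero _).hasFDerivAt.comp_hasDerivAt r hlin
  have : Continuous (fderiv ℝ F) := hF.continuous_fderiv one_ne_zero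
  rw [intervalIntegral.integral_eq_sub_of_hasDerivAt (fun r _ => hderiv r)
    (Continuous.intervalIntegrable (by fun_prop) _ _), hFR _ (by simp [he, le_abs_self])]
  simp

theorem integral_fderiv_angular {F : ℂ → ℂ} (hF : ContDiff ℝ 1 F) {r : ℝ} (hr : r ≠ 0) :
    ∫ θ in -π..π, fderiv ℝ F (r * exp (θ * I)) (I * exp (θ * I)) = 0 := by
  have hderiv (θ : ℝ) : HasDerivAt (fun θ : ℝ => r⁻¹ • F (r * exp (θ * I)))
      (fderiv ℝ F (r * exp (θ * I)) (I * exp (θ * I))) θ := by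
    have hcircle : HasDerivAt (fun θ : ℝ => (r : ℂ) * exp (θ * I)) (r • (I * exp (θ * I))) θ := by
      convert hasDerivAt_circleMap 0 r θ using 1
      · simp [circleMap, funext_iff]
      · simp only [real_smul, circleMap, zero_add]
        ring
    have := ((hF.differentiable one_ne_zero _).hasFDerivAt.comp_hasDerivAt θ
      hcircle).const_smul r⁻¹
    rwa [map_smul, inv_smul_smul₀ hr] at this
  have : Continuous (fderiv ℝ F) := hF.continuous_fderiv one_ne_zero
  rw [intervalIntegral.integral_eq_sub_of_hasDerivAt (fun θ _ => hderiv θ)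
    (Continuous.intervalIntegrable (by fun_prop) _ _)]
  simp [exp_neg]

theorem integral_dbar_mul_inv_eq_polar {F : ℂ → ℂ} {R : ℝ} (hFR : tsupport F ⊆ ball 0 R) :
    ∫ ζ, dbar F ζ * ζ⁻¹ = ∫ p in Ioc 0 R ×ˢ Ioo (-π) π,
      (fderiv ℝ F (p.1 * exp (p.2 * I)) (exp (p.2 * I)) +
        I * fderiv ℝ F (p.1 * exp (p.2 * I)) (I * exp (p.2 * I))) / 2 := by
  rw [← Complex.integral_comp_polarCoord_symm, polarCoord_target]
  have hpolar : ∀ p ∈ Ioi (0 : ℝ) ×ˢ Ioo (-π) π,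
      p.1 • (dbar F (Complex.polarCoord.symm p) * (Complex.polarCoord.symm p)⁻¹) =
      (fderiv ℝ F (p.1 * exp (p.2 * I)) (exp (p.2 * I)) +
        I * fderiv ℝ F (p.1 * exp (p.2 * I)) (I * exp (p.2 * I))) / 2 := by
    intro p hp
    have hp0 : (p.1 : ℂ) ≠ 0 := ofReal_ne_zero.2 hp.1.ne'
    have hsymm : Complex.polarCoord.symm p = p.1 * exp (p.2 * I) := by
      rw [Complex.polarCoord_symm_apply, exp_mul_I, ofReal_cos, ofReal_sin]
    have hexp := exp_ne_zero (p.2 * I)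
    rw [hsymm, dbar_eq_polar F _ p.2, real_smul]
    field_simp
  rw [setIntegral_congr_fun (measurableSet_Ioi.prod measurableSet_Ioo) hpolar]
  refine setIntegral_eq_of_subset_of_forall_sdiff_eq_zero
    (measurableSet_Ioi.prod measurableSet_Ioo) (prod_mono Ioc_subset_Ioi_self subset_rfl) ?_
  rintro p ⟨hp, hpR⟩
  have hRp : R < p.1 := lt_of_not_ge fun h => hpR ⟨⟨hp.1, h⟩, hp.2⟩
  have : fderiv ℝ F (p.1 * exp (p.2 * I)) = 0 := by
    refine notMem_support.1 fun h => hRp.not_gt ?_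
    simpa [norm_exp_ofReal_mul_I, abs_of_pos hp.1.out] using hFR (support_fderiv_subset ℝ h)
  simp [this]

theorem integrableOn_rectangle {H : ℝ × ℝ → ℂ} (hH : Continuous H) (a b c d : ℝ) :
    IntegrableOn H (uIcc a b ×ˢ uIcc c d) :=
  hH.continuousOn.integrableOn_compact (isCompact_uIcc.prod isCompact_uIcc)

theorem setIntegral_Ioc_prod_Ioo {H : ℝ × ℝ → ℂ} (hH : Continuous H) {a b c d : ℝ} (hab : a ≤ b)
    (hcd : c ≤ d) :
    ∫ p in Ioc a b ×ˢ Ioo c d, H p = ∫ r in a..b, ∫ θ in c..d, H (r, θ) := by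
  have hintegrable : IntegrableOn H (Ioc a b ×ˢ Ioo c d) :=
    (integrableOn_rectangle hH a b c d).mono_set
      (prod_mono (uIcc_of_le hab ▸ Ioc_subset_Icc_self) (uIcc_of_le hcd ▸ Ioo_subset_Icc_self))
  rw [Measure.volume_eq_prod] at hintegrable ⊢
  simp only [setIntegral_prod H hintegrable, intervalIntegral.integral_of_le hab,
    intervalIntegral.integral_of_le hcd, integral_Ioc_eq_integral_Ioo]

theorem integral_dbar_mul_inv {F : ℂ → ℂ} (hF : ContDiff ℝ 1 F) (hsupp : HasCompactSupport F) :
    ∫ ζ, dbar F ζ * ζ⁻¹ = -π * F 0 := by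
  obtain ⟨R, hR, hFR⟩ := hsupp.isBounded.subset_ball_lt 0 0
  have : Continuous (fderiv ℝ F) := hF.continuous_fderiv one_ne_zero
  let radial : ℝ × ℝ → ℂ := fun p => fderiv ℝ F (p.1 * exp (p.2 * I)) (exp (p.2 * I))
  let angular : ℝ × ℝ → ℂ := fun p => fderiv ℝ F (p.1 * exp (p.2 * I)) (I * exp (p.2 * I))
  have hradial : Continuous radial := by fun_prop
  have hangular : Continuous angular := by fun_prop
  have hradial_integral : ∫ r in 0..R, ∫ θ in -π..π, radial (r, θ) = -(2 * π) * F 0 := by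
    have hFR' : ∀ ζ, R ≤ ‖ζ‖ → F ζ = 0 := fun ζ hζ =>
      image_eq_zero_of_notMem_tsupport fun h => hζ.not_gt (by simpa using hFR h)
    rw [intervalIntegral_intervalIntegral_swap (F := fun r θ => radial (r, θ))
      ((integrableOn_rectangle hradial _ _ _ _).mono_set
        (prod_mono uIoc_subset_uIcc uIoc_subset_uIcc))]
    simp only [radial, integral_fderiv_radial hF hFR' (norm_exp_ofReal_mul_I _),
      intervalIntegral.integral_const, real_smul]
    push_cast
    ring
  have hangular_integral : ∫ r in 0..R, ∫ θ in -π..π, angular (r, θ) = 0 := by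
    rw [intervalIntegral.integral_of_le hR.le]
    exact setIntegral_eq_zero_of_forall_eq_zero fun r hr => integral_fderiv_angular hF hr.1.ne'
  have integrable {H : ℝ × ℝ → ℂ} (hH : Continuous H) :
      IntegrableOn H (Ioc 0 R ×ˢ Ioo (-π) π) :=
    (integrableOn_rectangle hH 0 R (-π) π).mono_set (prod_mono
      (uIcc_of_le hR.le ▸ Ioc_subset_Icc_self)
      (uIcc_of_le (neg_le_self Real.pi_pos.le) ▸ Ioo_subset_Icc_self))
  calc ∫ ζ, dbar F ζ * ζ⁻¹
      = ∫ p in Ioc 0 R ×ˢ Ioo (-π) π, (radial p + I * angular p) / 2 :=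
        integral_dbar_mul_inv_eq_polar hFR
    _ = ((∫ p in Ioc 0 R ×ˢ Ioo (-π) π, radial p) +
          I * ∫ p in Ioc 0 R ×ˢ Ioo (-π) π, angular p) / 2 := by
        rw [integral_div, integral_add (integrable hradial) ((integrable hangular).const_mul I),
          integral_const_mul]
    _ = -π * F 0 := by
        rw [setIntegral_Ioc_prod_Ioo hradial hR.le (neg_le_self Real.pi_pos.le),
          setIntegral_Ioc_prod_Ioo hangular hR.le (neg_le_self Real.pi_pos.le),
          hradial_integral, hangular_integral]
        ring

theorem cauchy_pompeiu {F : ℂ → ℂ} (hF : ContDiff ℝ 1 F) (hsupp : HasCompactSupport F) (t : ℂ) :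
    F t = ∫ ζ, (π : ℂ)⁻¹ * dbar F ζ * (t - ζ)⁻¹ := by
  have hshift : ∫ ζ, dbar F ζ * (t - ζ)⁻¹ = π * F t :=
    calc ∫ ζ, dbar F ζ * (t - ζ)⁻¹
        = ∫ ζ, -(dbar (fun z => F (z + t)) ζ * ζ⁻¹) := by
          rw [← integral_add_right_eq_self _ t]
          simp [dbar, fderiv_comp_add_right, inv_neg]
      _ = π * F t := by
          rw [integral_neg, integral_dbar_mul_inv (F := fun z => F (z + t)) (hF.comp (by fun_prop))
            (hsupp.comp_homeomorph (Homeomorph.addRight t)), zero_add, neg_mul, neg_neg]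
  have hπ : (π : ℂ) ≠ 0 := ofReal_ne_zero.2 Real.pi_ne_zero
  simp only [mul_assoc, integral_const_mul]
  rw [hshift, inv_mul_cancel_left₀ hπ]

end CauchyPompeiu

section Splitting

theorem exists_contDiff_bump {K V : Set ℂ} (hK : IsCompact K) (hV : IsOpen V) (hKV : K ⊆ V) :
    ∃ ψ : ℂ → ℂ, ContDiff ℝ 1 ψ ∧ HasCompactSupport ψ ∧ tsupport ψ ⊆ V ∧
      ∃ W, IsOpen W ∧ K ⊆ W ∧ ∀ ζ ∈ W, ψ ζ = 1 := by
  obtain ⟨L, hL, hKL, hLV⟩ := exists_compact_between hK hV hKV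
  obtain ⟨f, hf_one, hf_zero, -⟩ := exists_contMDiffMap_one_nhds_of_subset_interior (n := 1)
    (modelWithCornersSelf ℝ ℂ) hK.isClosed hKL
  obtain ⟨W, hW, hKW, hfW⟩ := eventually_nhdsSet_iff_exists.1 hf_one
  have hsupp : support (fun ζ => (f ζ : ℂ)) ⊆ L := fun ζ hζ =>
    by_contra fun h => hζ (by simp [hf_zero ζ h])
  refine ⟨fun ζ => f ζ, ofRealCLM.contDiff.comp f.contMDiff.contDiff, .of_support_subset_isCompact
    hL hsupp, (closure_minimal hsupp hL.isClosed).trans hLV, W, hW, hKW, fun ζ hζ => ?_⟩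
  simp [hfW ζ hζ]

theorem contDiff_mul_of_tsupport_subset {V : Set ℂ} {ψ q : ℂ → ℂ} (hV : IsOpen V)
    (hψ : ContDiff ℝ 1 ψ) (hψV : tsupport ψ ⊆ V) (hq : DifferentiableOn ℂ q V) :
    ContDiff ℝ 1 (fun ζ => ψ ζ * q ζ) := by
  rw [contDiff_iff_contDiffAt]
  intro ζ
  by_cases hζ : ζ ∈ tsupport fun ζ => ψ ζ * q ζ
  · have hζV : ζ ∈ V := hψV (tsupport_mul_subset_left hζ)
    exact hψ.contDiffAt.mul ((hq.analyticAt (hV.mem_nhds hζV)).contDiffAt.restrict_scalars ℝ)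
  · exact contDiffAt_const.congr_of_eventuallyEq (notMem_tsupport_iff_eventuallyEq.1 hζ)

theorem exists_cauchy_density {K V : Set ℂ} (hK : IsCompact K) (hV : IsOpen V) (hKV : K ⊆ V) :
    ∃ k : ℂ → ℂ, Continuous k ∧ HasCompactSupport k ∧ tsupport k ⊆ V ∧
      ∃ W, IsOpen W ∧ K ⊆ W ∧ W ⊆ V ∧ Disjoint (tsupport k) W ∧
        ∀ q : ℂ → ℂ, DifferentiableOn ℂ q V → ∀ t ∈ W, q t = ∫ ζ, k ζ * q ζ * (t - ζ)⁻¹ := by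
  obtain ⟨ψ, hψ, hψc, hψV, W, hW, hKW, hψW⟩ := exists_contDiff_bump hK hV hKV
  have hk_tsupport : tsupport (fun ζ => (π : ℂ)⁻¹ * dbar ψ ζ) ⊆ tsupport ψ :=
    closure_minimal ((support_mul_subset_right _ _).trans (support_dbar_subset ψ)) isClosed_closure
  have hk_zero : ∀ ζ ∈ W, dbar ψ ζ = 0 := fun ζ hζ => by
    have : ψ =ᶠ[𝓝 ζ] fun _ => 1 := eventually_of_mem (hW.mem_nhds hζ) hψW
    simp [dbar, this.fderiv_eq]
  refine ⟨fun ζ => (π : ℂ)⁻¹ * dbar ψ ζ, continuous_const.mul (continuous_dbar hψ),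
    hψc.mono' (subset_closure.trans hk_tsupport), hk_tsupport.trans hψV, W, hW, hKW,
    fun ζ hζ => hψV (subset_tsupport _ (by simp [hψW ζ hζ])), ?_, fun q hq t ht => ?_⟩
  · exact Disjoint.closure_left (disjoint_left.2 fun ζ hζ hζW => hζ (by simp [hk_zero ζ hζW])) hW
  have hpompeiu := cauchy_pompeiu (contDiff_mul_of_tsupport_subset hV hψ hψV hq) hψc.mul_right t
  rw [hψW t ht, one_mul] at hpompeiu
  refine hpompeiu.trans (integral_congr_ae (.of_forall fun ζ => ?_))
  have hdbar : dbar (fun z => ψ z * q z) ζ = dbar ψ ζ * q ζ := by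
    by_cases hζ : ζ ∈ V
    · exact dbar_mul_of_differentiableAt (hψ.differentiable one_ne_zero ζ)
        (hq.differentiableAt (hV.mem_nhds hζ))
    · have hζψ : ζ ∉ tsupport ψ := fun h => hζ (hψV h)
      rw [notMem_support.1 fun h => hζψ (support_dbar_subset ψ h), zero_mul,
        notMem_support.1 fun h => hζψ (tsupport_mul_subset_left (support_dbar_subset _ h))]
  simp only [hdbar, mul_assoc]

variable {n : ℕ}

theorem differentiableOn_update {E : Type*} [NormedAddCommGroup E] [NormedSpace ℂ E] {s : Set E}
    {x : E → Fin n → ℂ} {a : E → ℂ} (hx : DifferentiableOn ℂ x s) (ha : DifferentiableOn ℂ a s)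
    (i : Fin n) : DifferentiableOn ℂ (fun y => update (x y) i (a y)) s :=
  differentiableOn_pi.2 fun j => by
    rcases eq_or_ne j i with rfl | hj
    · simpa using ha
    · simpa [hj] using differentiableOn_pi.1 hx j

/-- The tube `U × {|y| < r}ⁿ`: coordinate `0` ranges over `U`, all others over a disk. -/
def tube (n : ℕ) (U : Set ℂ) (r : ℝ) : Set (Fin (n + 1) → ℂ) :=
  {v | v 0 ∈ U ∧ ∀ j ≠ 0, ‖v j‖ < r}

theorem isOpen_tube {U : Set ℂ} (hU : IsOpen U) (r : ℝ) : IsOpen (tube n U r) := by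
  have : tube n U r = (fun v => v 0) ⁻¹' U ∩ ⋂ j : Fin (n + 1), {v | j ≠ 0 → ‖v j‖ < r} := by
    ext; simp [tube]
  rw [this]
  refine (hU.preimage (continuous_apply 0)).inter (isOpen_iInter_of_finite fun j => ?_)
  by_cases hj : j = 0
  · simp [hj]
  · simpa [hj] using isOpen_lt (by fun_prop) continuous_const

theorem tube_mono {U V : Set ℂ} {r r' : ℝ} (hUV : U ⊆ V) (hr : r ≤ r') :
    tube n U r ⊆ tube n V r' :=
  fun _ hv => ⟨hUV hv.1, fun j hj => (hv.2 j hj).trans_le hr⟩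

theorem update_zero_mem_tube {U V : Set ℂ} {r : ℝ} {v : Fin (n + 1) → ℂ} (hv : v ∈ tube n U r)
    {ζ : ℂ} (hζ : ζ ∈ V) : update v 0 ζ ∈ tube n V r :=
  ⟨by simpa using hζ, fun j hj => by simpa [hj] using hv.2 j hj⟩

/-- The Cauchy transform in coordinate `0` of `q`, smeared with the density `k` over `E`. -/
def cauchyTransform (μ : Measure ℂ) (E : Set ℂ) (k : ℂ → ℂ) (q : (Fin (n + 1) → ℂ) → ℂ)
    (v : Fin (n + 1) → ℂ) : ℂ :=
  ∫ ζ in E, k ζ * q (update v 0 ζ) * (v 0 - ζ)⁻¹ ∂μ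

variable {μ : Measure ℂ} [IsFiniteMeasureOnCompacts μ] {E V : Set ℂ} {r : ℝ} {k : ℂ → ℂ}
  {q : (Fin (n + 1) → ℂ) → ℂ}

theorem analyticOnNhd_cauchyTransform (hE : IsCompact E) (hEV : E ⊆ V) (hk : Continuous k)
    (hq : AnalyticOnNhd ℂ q (tube n V r)) :
    AnalyticOnNhd ℂ (cauchyTransform μ E k q) (tube n Eᶜ r) := by
  have hmem {v : Fin (n + 1) → ℂ} (hv : v ∈ tube n Eᶜ r) {ζ : ℂ} (hζ : ζ ∈ E) :
      update v 0 ζ ∈ tube n V r := update_zero_mem_tube hv (hEV hζ)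
  have hne {v : Fin (n + 1) → ℂ} (hv : v ∈ tube n Eᶜ r) {ζ : ℂ} (hζ : ζ ∈ E) : v 0 - ζ ≠ 0 :=
    sub_ne_zero.2 fun h => hv.1 (h ▸ hζ)
  refine analyticOnNhd_setIntegral hE (isOpen_tube hE.isClosed.isOpen_compl r) ?_ fun ζ hζ => ?_
  · refine ContinuousOn.mul (ContinuousOn.mul (by fun_prop) ?_)
      (ContinuousOn.inv₀ (by fun_prop) fun p hp => hne hp.1 hp.2)
    exact hq.continuousOn.comp (f := fun p : (Fin (n + 1) → ℂ) × ℂ => update p.1 0 p.2)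
      (Continuous.continuousOn (by fun_prop)) fun p hp => hmem hp.1 hp.2
  · refine DifferentiableOn.mul ((hq.differentiableOn.comp (differentiableOn_update
      differentiableOn_id (differentiableOn_const ζ) 0) fun v hv => hmem hv hζ).const_mul _) ?_
    exact DifferentiableOn.inv (by fun_prop) fun v hv => hne hv hζ

theorem cauchyTransform_add_restrict_compl {E₁ E₂ : Set ℂ} (hE₁ : IsCompact E₁)
    (hE₂ : IsCompact E₂) (hEV : E₁ ∪ E₂ ⊆ V) (hk : Continuous k)
    (hq : ContinuousOn q (tube n V r)) {v : Fin (n + 1) → ℂ} (hv : v ∈ tube n (E₁ ∪ E₂)ᶜ r) :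
    cauchyTransform μ E₁ k q v + cauchyTransform (μ.restrict E₁ᶜ) E₂ k q v =
      cauchyTransform μ (E₁ ∪ E₂) k q v := by
  have hintegrable : IntegrableOn (fun ζ => k ζ * q (update v 0 ζ) * (v 0 - ζ)⁻¹) (E₁ ∪ E₂) μ := by
    refine ContinuousOn.integrableOn_compact (hE₁.union hE₂) ?_
    refine ContinuousOn.fun_mul (ContinuousOn.fun_mul hk.continuousOn ?_) (ContinuousOn.inv₀
      (continuousOn_const.sub continuousOn_id) fun ζ hζ => sub_ne_zero.2 fun h => hv.1 (h ▸ hζ))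
    exact hq.comp (Continuous.continuousOn (by fun_prop)) fun ζ hζ =>
      update_zero_mem_tube hv (hEV hζ)
  rw [cauchyTransform, cauchyTransform, cauchyTransform,
    Measure.restrict_restrict hE₂.measurableSet, ← sdiff_eq, ← union_sdiff_self,
    setIntegral_union disjoint_sdiff_right (hE₂.measurableSet.diff hE₁.measurableSet)
      (hintegrable.mono_set subset_union_left)
      (hintegrable.mono_set (sdiff_subset.trans subset_union_right))]

theorem exists_norm_cauchyTransform_le (hE : IsCompact E) (hEV : E ⊆ V) (hk : Continuous k)
    {C : Set ℂ} (hC : IsClosed C) (hEC : Disjoint E C) :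
    ∃ S, IsOpen S ∧ C ⊆ S ∧ S ⊆ Eᶜ ∧ ∃ c > 0, ∀ (n : ℕ) (q : (Fin (n + 1) → ℂ) → ℂ) (r M : ℝ),
      0 ≤ M → (∀ v ∈ tube n V r, ‖q v‖ ≤ M) →
        ∀ v ∈ tube n S r, ‖cauchyTransform μ E k q v‖ ≤ c * M := by
  obtain ⟨δ, hδ, hdisj⟩ := hEC.exists_thickenings hE hC
  obtain ⟨B, hB⟩ := hE.exists_bound_of_continuousOn hk.continuousOn
  refine ⟨thickening δ C, isOpen_thickening, self_subset_thickening hδ C, fun ζ hζ hζE =>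
    disjoint_left.1 hdisj (self_subset_thickening hδ E hζE) hζ, |B| * δ⁻¹ * μ.real E + 1,
    by positivity, fun n q r M hM hqM v hv => ?_⟩
  refine (norm_setIntegral_le_of_norm_le_const (C := |B| * M * δ⁻¹) hE.measure_lt_top
    fun ζ hζ => ?_).trans (by nlinarith)
  have hdist : δ ≤ ‖v 0 - ζ‖ := by
    rw [← dist_eq_norm]
    by_contra! h
    exact disjoint_left.1 hdisj (mem_thickening_iff.2 ⟨ζ, hζ, h⟩) hv.1
  rw [norm_mul, norm_mul, norm_inv]
  gcongr
  · exact (hB ζ hζ).trans (le_abs_self B)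
  · exact hqM _ (update_zero_mem_tube hv (hEV hζ))

theorem exists_isOpen_inter_subset {X : Type*} [TopologicalSpace X] [NormalSpace X]
    {C₁ C₂ W : Set X} (hC₁ : IsClosed C₁) (hC₂ : IsClosed C₂) (hW : IsOpen W)
    (hCW : C₁ ∩ C₂ ⊆ W) :
    ∃ O₁ O₂, IsOpen O₁ ∧ IsOpen O₂ ∧ C₁ ⊆ O₁ ∧ C₂ ⊆ O₂ ∧ O₁ ∩ O₂ ⊆ W := by
  obtain ⟨O₁, O₂, hO₁, hO₂, hC₁O, hC₂O, hO⟩ := normal_separation (hC₁.sdiff hW) (hC₂.sdiff hW)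
    (disjoint_left.2 fun x h₁ h₂ => h₁.2 (hCW ⟨h₁.1, h₂.1⟩))
  refine ⟨O₁ ∪ W, O₂ ∪ W, hO₁.union hW, hO₂.union hW, union_comm O₁ W ▸ sdiff_subset_iff.1 hC₁O,
    union_comm O₂ W ▸ sdiff_subset_iff.1 hC₂O, ?_⟩
  rw [← inter_union_distrib_right, hO.inter_eq, empty_union]

theorem exists_cauchyTransform_add_eq {C₁ C₂ : Set ℂ} (hC₁ : IsClosed C₁) (hC₂ : IsClosed C₂)
    (hC : IsCompact (C₁ ∩ C₂)) (hV : IsOpen V) (hCV : C₁ ∩ C₂ ⊆ V) :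
    ∃ k : ℂ → ℂ, Continuous k ∧ ∃ E₁ E₂, IsCompact E₁ ∧ IsCompact E₂ ∧ E₁ ∪ E₂ ⊆ V ∧
      Disjoint E₁ C₁ ∧ Disjoint E₂ C₂ ∧ ∃ W, IsOpen W ∧ C₁ ∩ C₂ ⊆ W ∧ W ⊆ V ∧
        ∀ (n : ℕ) (q : (Fin (n + 1) → ℂ) → ℂ) (r : ℝ), AnalyticOnNhd ℂ q (tube n V r) →
          ∀ v ∈ tube n W r, cauchyTransform volume E₁ k q v +
            cauchyTransform (volume.restrict E₁ᶜ) E₂ k q v = q v := by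
  obtain ⟨k, hk, hkc, hkV, W, hW, hCW, hWV, hkW, hformula⟩ := exists_cauchy_density hC hV hCV
  obtain ⟨E₁, E₂, hE₁, hE₂, hE₁C, hE₂C, hE⟩ := hkc.isCompact.binary_compact_cover
    hC₁.isOpen_compl hC₂.isOpen_compl fun ζ hζ => by
      rw [← compl_inter]
      exact fun h => disjoint_left.1 hkW hζ (hCW h)
  refine ⟨k, hk, E₁, E₂, hE₁, hE₂, hE ▸ hkV, subset_compl_iff_disjoint_right.1 hE₁C,
    subset_compl_iff_disjoint_right.1 hE₂C, W, hW, hCW, hWV, fun n q r hq v hv => ?_⟩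
  have hWE : W ⊆ (E₁ ∪ E₂)ᶜ := hE ▸ subset_compl_iff_disjoint_left.2 hkW
  rw [cauchyTransform_add_restrict_compl hE₁ hE₂ (hE ▸ hkV) hk hq.continuousOn
    (tube_mono hWE le_rfl hv), cauchyTransform, setIntegral_eq_integral_of_forall_compl_eq_zero]
  · have hslice : DifferentiableOn ℂ (fun ζ => q (update v 0 ζ)) V :=
      hq.differentiableOn.comp (differentiableOn_update (differentiableOn_const v)
        differentiableOn_id 0) fun ζ hζ => update_zero_mem_tube hv hζ
    simpa using (hformula _ hslice _ hv.1).symm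
  · intro ζ hζ
    rw [image_eq_zero_of_notMem_tsupport (f := k) (hE ▸ hζ), zero_mul, zero_mul]

theorem exists_additive_splitting {C₁ C₂ : Set ℂ} (hC₁ : IsClosed C₁) (hC₂ : IsClosed C₂)
    (hC : IsCompact (C₁ ∩ C₂)) (hV : IsOpen V) (hCV : C₁ ∩ C₂ ⊆ V) :
    ∃ S₁ S₂, IsOpen S₁ ∧ IsOpen S₂ ∧ C₁ ⊆ S₁ ∧ C₂ ⊆ S₂ ∧ S₁ ∩ S₂ ⊆ V ∧ ∃ c > 0,
      ∀ (n : ℕ) (q : (Fin (n + 1) → ℂ) → ℂ) (r M : ℝ), 0 ≤ M → AnalyticOnNhd ℂ q (tube n V r) →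
        (∀ v ∈ tube n V r, ‖q v‖ ≤ M) → ∃ q₁ q₂ : (Fin (n + 1) → ℂ) → ℂ,
          AnalyticOnNhd ℂ q₁ (tube n S₁ r) ∧ AnalyticOnNhd ℂ q₂ (tube n S₂ r) ∧
          (∀ v ∈ tube n S₁ r, ‖q₁ v‖ ≤ c * M) ∧ (∀ v ∈ tube n S₂ r, ‖q₂ v‖ ≤ c * M) ∧
          ∀ v ∈ tube n (S₁ ∩ S₂) r, q₁ v + q₂ v = q v := by
  obtain ⟨k, hk, E₁, E₂, hE₁, hE₂, hEV, hEC₁, hEC₂, W, hW, hCW, hWV, hsum⟩ :=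
    exists_cauchyTransform_add_eq hC₁ hC₂ hC hV hCV
  obtain ⟨hE₁V, hE₂V⟩ := union_subset_iff.1 hEV
  obtain ⟨O₁, O₂, hO₁, hO₂, hCO₁, hCO₂, hOW⟩ := exists_isOpen_inter_subset hC₁ hC₂ hW hCW
  obtain ⟨S₁, hS₁, hCS₁, hSE₁, c₁, hc₁, hbound₁⟩ :=
    exists_norm_cauchyTransform_le (μ := volume) hE₁ hE₁V hk hC₁ hEC₁
  obtain ⟨S₂, hS₂, hCS₂, hSE₂, c₂, -, hbound₂⟩ :=
    exists_norm_cauchyTransform_le (μ := volume.restrict E₁ᶜ) hE₂ hE₂V hk hC₂ hEC₂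
  refine ⟨S₁ ∩ O₁, S₂ ∩ O₂, hS₁.inter hO₁, hS₂.inter hO₂, subset_inter hCS₁ hCO₁,
    subset_inter hCS₂ hCO₂, fun t ht => hWV (hOW ⟨ht.1.2, ht.2.2⟩), max c₁ c₂,
    lt_max_of_lt_left hc₁, fun n q r M hM hq hqM => ?_⟩
  refine ⟨cauchyTransform volume E₁ k q, cauchyTransform (volume.restrict E₁ᶜ) E₂ k q,
    (analyticOnNhd_cauchyTransform hE₁ hE₁V hk hq).mono
      (tube_mono (inter_subset_left.trans hSE₁) le_rfl),
    (analyticOnNhd_cauchyTransform hE₂ hE₂V hk hq).mono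
      (tube_mono (inter_subset_left.trans hSE₂) le_rfl), fun v hv => ?_, fun v hv => ?_,
    fun v hv => ?_⟩
  · exact (hbound₁ n q r M hM hqM v (tube_mono inter_subset_left le_rfl hv)).trans
      (mul_le_mul_of_nonneg_right (le_max_left _ _) hM)
  · exact (hbound₂ n q r M hM hqM v (tube_mono inter_subset_left le_rfl hv)).trans
      (mul_le_mul_of_nonneg_right (le_max_right _ _) hM)
  · exact hsum n q r hq v (tube_mono (fun t ht => hOW ⟨ht.1.2, ht.2.2⟩) le_rfl hv)

end Splitting

section Division

/-- The open sector of directions `θ ∈ (α, β)` in `ℂ`, with vertex `0` excluded. -/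
def sector (α β : ℝ) : Set ℂ :=
  {w | w ≠ 0 ∧ ∃ θ ∈ Ioo α β, w = (‖w‖ : ℂ) * exp (θ * I)}

variable {α β : ℝ}

theorem sector_eq_image_exp (α β : ℝ) : sector α β = exp '' (im ⁻¹' Ioo α β) := by
  ext w
  constructor
  · rintro ⟨hw, θ, hθ, hwθ⟩
    refine ⟨Real.log ‖w‖ + θ * I, by simpa using hθ, ?_⟩
    rw [exp_add, ← ofReal_exp, Real.exp_log (norm_pos_iff.2 hw), ← hwθ]
  · rintro ⟨z, hz, rfl⟩
    refine ⟨exp_ne_zero z, z.im, hz, ?_⟩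
    rw [norm_exp, ofReal_exp, ← exp_add, re_add_im]

theorem isOpen_sector (α β : ℝ) : IsOpen (sector α β) := by
  rw [sector_eq_image_exp]
  exact isOpenMap_exp _ (isOpen_Ioo.preimage continuous_im)

theorem frequently_nhds_zero_mem_sector (hαβ : α < β) : ∃ᶠ w in 𝓝 (0 : ℂ), w ∈ sector α β := by
  obtain ⟨θ, hθ⟩ := exists_between hαβ
  have htendsto : Tendsto (fun x : ℝ => exp (x + θ * I)) atBot (𝓝 0) := by
    rw [tendsto_exp_nhds_zero_iff]
    simp only [add_re, ofReal_re, mul_re, I_re, mul_zero, ofReal_im, I_im, mul_one, sub_self,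
      add_zero]
    exact Filter.tendsto_id
  refine htendsto.frequently (Frequently.of_forall fun x => ?_)
  rw [sector_eq_image_exp]
  exact mem_image_of_mem _ (by simpa using hθ)

section OneVariable

variable {φ ψ : ℂ → ℂ} {n : ℕ} {K : ℝ}

theorem meromorphicOrderAt_div_pow_nonneg {z : ℂ} (hαβ : α < β) (hφ : AnalyticAt ℂ φ z)
    (hψ : AnalyticAt ℂ ψ z) (hφ_ne : ¬∀ᶠ w in 𝓝 z, φ w = 0)
    (hbound : ∀ᶠ w in 𝓝 z, φ w ∈ sector α β → ‖ψ w‖ ≤ K * ‖φ w‖ ^ n) :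
    0 ≤ meromorphicOrderAt (fun w => ψ w / φ w ^ n) z := by
  by_cases hφz : φ z = 0
  swap
  · exact (hψ.fun_div (hφ.fun_pow n) (pow_ne_zero n hφz)).meromorphicOrderAt_nonneg
  by_contra! hneg
  have hpole : ∀ᶠ w in 𝓝[≠] z, K < ‖ψ w / φ w ^ n‖ :=
    (tendsto_norm_cobounded_atTop.comp
      (tendsto_cobounded_of_meromorphicOrderAt_neg hneg)).eventually_gt_atTop K
  have hopen : 𝓝 0 ≤ map φ (𝓝 z) := by
    have := hφ.eventually_constant_or_nhds_le_map_nhds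
    rw [hφz] at this
    exact this.resolve_left hφ_ne
  have hsector : ∃ᶠ w in 𝓝 z, φ w ∈ sector α β :=
    frequently_map.1 ((frequently_nhds_zero_mem_sector hαβ).filter_mono hopen)
  obtain ⟨w, hw, hw_bound, hw_pole⟩ :=
    (hsector.and_eventually (hbound.and (eventually_nhdsWithin_iff.1 hpole))).exists
  have hw_ne : w ≠ z := by
    rintro rfl
    exact hw.1 hφz
  refine (hw_pole hw_ne).not_ge ?_
  rw [norm_div, norm_pow, div_le_iff₀ (pow_pos (norm_pos_iff.2 hw.1) n)]
  exact hw_bound hw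

theorem exists_analyticOnNhd_eq_pow_mul {U : Set ℂ} (hαβ : α < β) (hφ : AnalyticOnNhd ℂ φ U)
    (hψ : AnalyticOnNhd ℂ ψ U) (hφ_ne : ∀ z ∈ U, ¬∀ᶠ w in 𝓝 z, φ w = 0)
    (hbound : ∀ z ∈ U, ∀ᶠ w in 𝓝 z, φ w ∈ sector α β → ‖ψ w‖ ≤ K * ‖φ w‖ ^ n) :
    ∃ χ : ℂ → ℂ, AnalyticOnNhd ℂ χ U ∧ ∀ z ∈ U, ψ z = φ z ^ n * χ z := by
  have hmero : MeromorphicOn (fun w => ψ w / φ w ^ n) U := fun z hz =>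
    (hψ z hz).meromorphicAt.fun_div ((hφ z hz).meromorphicAt.fun_pow n)
  have hχ : AnalyticOnNhd ℂ (toMeromorphicNFOn (fun w => ψ w / φ w ^ n) U) U := fun z hz => by
    rw [← (meromorphicNFOn_toMeromorphicNFOn _ U hz).meromorphicOrderAt_nonneg_iff_analyticAt,
      meromorphicOrderAt_toMeromorphicNFOn hmero hz]
    exact meromorphicOrderAt_div_pow_nonneg hαβ (hφ z hz) (hψ z hz) (hφ_ne z hz) (hbound z hz)
  refine ⟨_, hχ, fun z hz => ?_⟩
  have hpunctured : ψ =ᶠ[𝓝[≠] z]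
      fun w => φ w ^ n * toMeromorphicNFOn (fun w => ψ w / φ w ^ n) U w := by
    filter_upwards [hmero.toMeromorphicNFOn_eq_self_on_nhdsNE hz,
      (hφ z hz).eventually_eq_zero_or_eventually_ne_zero.resolve_left (hφ_ne z hz)] with w hw hφw
    rw [hw, mul_div_cancel₀ _ (pow_ne_zero n hφw)]
  exact (((hψ z hz).continuousAt.eventuallyEq_nhds_iff_eventuallyEq_nhdsNE
    (((hφ z hz).fun_pow n).fun_mul (hχ z hz)).continuousAt).1 hpunctured).eq_of_nhds

theorem eq_pow_mul_circleIntegral_div (hαβ : α < β) (hφ : AnalyticOnNhd ℂ φ (closedBall 0 1))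
    (hψ : AnalyticOnNhd ℂ ψ (closedBall 0 1)) (hφ_ne : ∀ z ∈ sphere (0 : ℂ) 1, φ z ≠ 0)
    (hbound : ∀ z ∈ closedBall (0 : ℂ) 1, ∀ᶠ w in 𝓝 z,
      φ w ∈ sector α β → ‖ψ w‖ ≤ K * ‖φ w‖ ^ n) :
    ψ 0 = φ 0 ^ n * ((2 * π * I : ℂ)⁻¹ • ∮ z in C(0, 1), (z - 0)⁻¹ • (ψ z / φ z ^ n)) := by
  have hφ_ne' : ∀ z ∈ closedBall (0 : ℂ) 1, ¬∀ᶠ w in 𝓝 z, φ w = 0 := fun z hz hzero =>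
    hφ_ne 1 (by simp) (hφ.eqOn_zero_of_preconnected_of_eventuallyEq_zero
      (convex_closedBall _ _).isPreconnected hz hzero (by simp))
  obtain ⟨χ, hχ, hψχ⟩ := exists_analyticOnNhd_eq_pow_mul hαβ hφ hψ hφ_ne' hbound
  have hcircle : ∮ z in C(0, 1), (z - 0)⁻¹ • (ψ z / φ z ^ n) = ∮ z in C(0, 1), (z - 0)⁻¹ • χ z := by
    refine circleIntegral.integral_congr zero_le_one fun z hz => ?_
    simp only [hψχ z (sphere_subset_closedBall hz),
      mul_div_cancel_left₀ _ (pow_ne_zero n (hφ_ne z hz))]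
  rw [hcircle, hχ.differentiableOn.circleIntegral_sub_inv_smul (mem_ball_self one_pos),
    inv_smul_smul₀ two_pi_I_ne_zero]
  exact hψχ 0 (mem_closedBall_self zero_le_one)

end OneVariable

section Slicing

variable {E : Type*} [NormedAddCommGroup E] [NormedSpace ℂ E] {Ω : Set E} {Q : E → ℂ} {p : E}

theorem exists_forall_sphere_add_smul_ne_zero (hΩ : IsOpen Ω) (hQ : AnalyticOnNhd ℂ Q Ω)
    (hp : p ∈ Ω) (hQp : ¬∀ᶠ x in 𝓝 p, Q x = 0) :
    ∃ u : E, (∀ z ∈ closedBall (0 : ℂ) 1, p + z • u ∈ Ω) ∧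
      ∀ z ∈ sphere (0 : ℂ) 1, Q (p + z • u) ≠ 0 := by
  obtain ⟨R, hR, hRΩ⟩ := isOpen_iff.1 hΩ p hp
  obtain ⟨x, hQx, hx⟩ := ((not_eventually.1 hQp).and_eventually (ball_mem_nhds p hR)).exists
  have hline {z : ℂ} (hz : ‖z‖ ≤ 1) : p + z • (x - p) ∈ Ω := hRΩ <| by
    rw [mem_ball_iff_norm, add_sub_cancel_left, norm_smul]
    exact (mul_le_of_le_one_left (norm_nonneg _) hz).trans_lt (mem_ball_iff_norm.1 hx)
  have hslice : AnalyticOnNhd ℂ (fun z : ℂ => Q (p + z • (x - p))) (closedBall 0 1) :=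
    fun z hz => (hQ _ (hline (mem_closedBall_zero_iff.1 hz))).comp_of_eq (by fun_prop) rfl
  have hpunctured : ∀ᶠ z in 𝓝[≠] (0 : ℂ), Q (p + z • (x - p)) ≠ 0 := by
    refine (hslice 0 (by simp)).eventually_eq_zero_or_eventually_ne_zero.resolve_left fun h => ?_
    have := hslice.eqOn_zero_of_preconnected_of_eventuallyEq_zero
      (convex_closedBall _ _).isPreconnected (by simp) h (x := 1) (by simp)
    exact hQx (by simpa using this)
  obtain ⟨δ, hδ, hne⟩ := Metric.eventually_nhds_iff.1 (eventually_nhdsWithin_iff.1 hpunctured)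
  obtain ⟨ε, hε, hεδ⟩ := exists_between (lt_min hδ one_pos)
  obtain ⟨hεδ, hε1⟩ := lt_min_iff.1 hεδ
  have hnorm (z : ℂ) : ‖z * (ε : ℂ)‖ = ‖z‖ * ε := by
    rw [norm_mul, norm_real, Real.norm_of_nonneg hε.le]
  refine ⟨(ε : ℂ) • (x - p), fun z hz => ?_, fun z hz => ?_⟩
  · rw [smul_smul]
    refine hline ?_
    rw [hnorm]
    exact mul_le_one₀ (mem_closedBall_zero_iff.1 hz) hε.le hε1.le
  · rw [smul_smul]
    have hz : ‖z * (ε : ℂ)‖ = ε := by rw [hnorm, mem_sphere_zero_iff_norm.1 hz, one_mul]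
    exact hne (by rwa [dist_zero_right, hz]) (norm_pos_iff.1 (hz.symm ▸ hε))

theorem exists_eventually_le_norm_add_smul (hΩ : IsOpen Ω) (hQ : AnalyticOnNhd ℂ Q Ω)
    (hp : p ∈ Ω) (hQp : ¬∀ᶠ x in 𝓝 p, Q x = 0) :
    ∃ u : E, ∃ c > 0, ∀ᶠ x in 𝓝 p, (∀ z ∈ closedBall (0 : ℂ) 1, x + z • u ∈ Ω) ∧
      ∀ z ∈ sphere (0 : ℂ) 1, c ≤ ‖Q (x + z • u)‖ := by
  obtain ⟨u, huΩ, hu_ne⟩ := exists_forall_sphere_add_smul_ne_zero hΩ hQ hp hQp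
  have hslice : ContinuousOn (fun z : ℂ => ‖Q (p + z • u)‖) (sphere 0 1) :=
    hQ.continuousOn.norm.comp (Continuous.continuousOn (by fun_prop)) fun z hz =>
      huΩ z (sphere_subset_closedBall hz)
  obtain ⟨z₀, hz₀, hmin⟩ := (isCompact_sphere (0 : ℂ) 1).exists_isMinOn ⟨1, by simp⟩ hslice
  obtain ⟨c, hc, hcz₀⟩ := exists_between (norm_pos_iff.2 (hu_ne z₀ hz₀))
  have hadd (z : ℂ) : ContinuousAt (fun y : E × ℂ => y.1 + y.2 • u) (p, z) := by fun_prop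
  refine ⟨u, c, hc, Eventually.and ?_ ?_⟩
  · refine (isCompact_closedBall 0 1).eventually_forall_of_forall_eventually fun z hz => ?_
    exact hadd z (hΩ.mem_nhds (huΩ z hz))
  · refine (isCompact_sphere 0 1).eventually_forall_of_forall_eventually fun z hz => ?_
    have hcont : ContinuousAt (fun y : E × ℂ => ‖Q (y.1 + y.2 • u)‖) (p, z) :=
      ((hQ _ (huΩ z (sphere_subset_closedBall hz))).continuousAt.comp_of_eq (hadd z) rfl).norm
    exact (hcont.eventually_const_lt (hcz₀.trans_le (hmin hz))).mono fun _ => le_of_lt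

end Slicing

/-- The quotient `h / Qⁿ`, extended by continuity to the zeros of `Q`. -/
def divPow {E : Type*} [TopologicalSpace E] (Q : E → ℂ) (n : ℕ) (h : E → ℂ) (x : E) : ℂ :=
  limUnder (𝓝[{y | Q y ≠ 0}] x) fun y => h y / Q y ^ n

theorem eqOn_divPow {E : Type*} [TopologicalSpace E] {O : Set E} (hO : IsOpen O) {Q h q : E → ℂ}
    {n : ℕ} (hQ : ∀ x ∈ O, ¬∀ᶠ y in 𝓝 x, Q y = 0) (hq : ContinuousOn q O)
    (hhq : ∀ x ∈ O, h x = Q x ^ n * q x) : EqOn (divPow Q n h) q O := by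
  intro x hx
  have : NeBot (𝓝[{y | Q y ≠ 0}] x) :=
    mem_closure_iff_nhdsWithin_neBot.1 (mem_closure_iff_frequently.2
      (not_eventually.1 (hQ x hx)))
  refine Tendsto.limUnder_eq (((hq.continuousAt (hO.mem_nhds hx)).mono_left
    nhdsWithin_le_nhds).congr' ?_)
  filter_upwards [self_mem_nhdsWithin, nhdsWithin_le_nhds (hO.mem_nhds hx)] with y hy hyO
  rw [hhq y hyO, mul_div_cancel_left₀ _ (pow_ne_zero n hy)]

/-- Bounded holomorphic functions `h` on `Ω` that are `O(Qⁿ)` where `Q` lies in the sector are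
divisible by `Qⁿ` on `O`, with the quotient larger than `h` by at most the factor `cⁿ`. -/
def DividesPowers {E : Type*} [NormedAddCommGroup E] [NormedSpace ℂ E] (α β : ℝ) (Q : E → ℂ)
    (Ω O : Set E) (c : ℝ) : Prop :=
  ∀ (n : ℕ) (h : E → ℂ) (M K : ℝ), AnalyticOnNhd ℂ h Ω → (∀ x ∈ Ω, ‖h x‖ ≤ M) →
    (∀ x ∈ Ω, Q x ∈ sector α β → ‖h x‖ ≤ K * ‖Q x‖ ^ n) →
    AnalyticOnNhd ℂ (divPow Q n h) O ∧
      ∀ x ∈ O, h x = Q x ^ n * divPow Q n h x ∧ ‖divPow Q n h x‖ ≤ M * c ^ n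

variable {N : ℕ} {Ω : Set (Fin N → ℂ)} {Q : (Fin N → ℂ) → ℂ}

theorem DividesPowers.union {E : Type*} [NormedAddCommGroup E] [NormedSpace ℂ E] {Q : E → ℂ}
    {Ω O₁ O₂ : Set E} {c₁ c₂ : ℝ} (h₁ : DividesPowers α β Q Ω O₁ c₁) (hc₁ : 0 < c₁)
    (h₂ : DividesPowers α β Q Ω O₂ c₂) (hc₂ : 0 < c₂) :
    DividesPowers α β Q Ω (O₁ ∪ O₂) (max c₁ c₂) := by
  intro n h M K hh hM hK
  obtain ⟨han₁, hdiv₁⟩ := h₁ n h M K hh hM hK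
  obtain ⟨han₂, hdiv₂⟩ := h₂ n h M K hh hM hK
  have henlarge {c a : ℝ} (hc : 0 < c) (hle : c ≤ max c₁ c₂) (ha : 0 ≤ a) (haM : a ≤ M * c ^ n) :
      a ≤ M * max c₁ c₂ ^ n := by
    have hM₀ : 0 ≤ M := nonneg_of_mul_nonneg_left (ha.trans haM) (pow_pos hc n)
    exact haM.trans (by gcongr)
  refine ⟨fun x hx => hx.elim (han₁ x) (han₂ x), ?_⟩
  rintro x (hx | hx)
  · exact ⟨(hdiv₁ x hx).1, henlarge hc₁ (le_max_left _ _) (norm_nonneg _) (hdiv₁ x hx).2⟩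
  · exact ⟨(hdiv₂ x hx).1, henlarge hc₂ (le_max_right _ _) (norm_nonneg _) (hdiv₂ x hx).2⟩

theorem norm_two_pi_I_inv_smul_circleIntegral_le {χ : ℂ → ℂ} {M : ℝ}
    (hχ : ∀ z ∈ sphere (0 : ℂ) 1, ‖χ z‖ ≤ M) :
    ‖(2 * π * I : ℂ)⁻¹ • ∮ z in C(0, 1), (z - 0)⁻¹ • χ z‖ ≤ M := by
  refine (circleIntegral.norm_two_pi_i_inv_smul_integral_le_of_norm_le_const zero_le_one
    fun z hz => ?_).trans_eq (one_mul M)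
  rw [norm_smul, norm_inv, sub_zero, mem_sphere_zero_iff_norm.1 hz, inv_one, one_mul]
  exact hχ z hz

theorem analyticOnNhd_circleIntegral_add_smul {χ : (Fin N → ℂ) → ℂ} {O : Set (Fin N → ℂ)}
    {u : Fin N → ℂ} (hO : IsOpen O)
    (hχ : ∀ x ∈ O, ∀ z ∈ sphere (0 : ℂ) 1, AnalyticAt ℂ χ (x + z • u)) :
    AnalyticOnNhd ℂ (fun x => (2 * π * I : ℂ)⁻¹ • ∮ z in C(0, 1), (z - 0)⁻¹ • χ (x + z • u)) O := by
  refine (analyticOnNhd_const (v := (2 * π * I : ℂ)⁻¹)).smul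
    (analyticOnNhd_circleIntegral zero_le_one hO (fun y hy => ?_) fun z hz x hx => ?_)
  · have hy_ne : y.2 - 0 ≠ 0 := by simpa using ne_of_mem_sphere hy.2 one_ne_zero
    have hinv : ContinuousAt (fun y : (Fin N → ℂ) × ℂ => (y.2 - 0)⁻¹) y :=
      ContinuousAt.inv₀ (by fun_prop) hy_ne
    exact (hinv.smul ((hχ y.1 hy.1 y.2 hy.2).continuousAt.comp_of_eq
      (f := fun y : (Fin N → ℂ) × ℂ => y.1 + y.2 • u) (by fun_prop) rfl)).continuousWithinAt
  · have hcomp : DifferentiableAt ℂ (fun x => χ (x + z • u)) x :=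
      (hχ x hx z hz).differentiableAt.comp x (f := fun x => x + z • u) (by fun_prop)
    exact (hcomp.const_smul (z - 0)⁻¹).differentiableWithinAt

theorem eq_pow_mul_circleIntegral_add_smul (hαβ : α < β) (hΩ : IsOpen Ω)
    (hQ : AnalyticOnNhd ℂ Q Ω) {h : (Fin N → ℂ) → ℂ} {n : ℕ} {K : ℝ} (hh : AnalyticOnNhd ℂ h Ω)
    (hK : ∀ x ∈ Ω, Q x ∈ sector α β → ‖h x‖ ≤ K * ‖Q x‖ ^ n) {x u : Fin N → ℂ}
    (hxΩ : ∀ z ∈ closedBall (0 : ℂ) 1, x + z • u ∈ Ω)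
    (hne : ∀ z ∈ sphere (0 : ℂ) 1, Q (x + z • u) ≠ 0) :
    h x = Q x ^ n * ((2 * π * I : ℂ)⁻¹ •
      ∮ z in C(0, 1), (z - 0)⁻¹ • (h (x + z • u) / Q (x + z • u) ^ n)) := by
  have hline (z : ℂ) : AnalyticAt ℂ (fun z : ℂ => x + z • u) z := by fun_prop
  have := eq_pow_mul_circleIntegral_div (n := n) (K := K) hαβ
    (fun z hz => (hQ _ (hxΩ z hz)).comp_of_eq (hline z) rfl)
    (fun z hz => (hh _ (hxΩ z hz)).comp_of_eq (hline z) rfl) hne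
    fun z hz => ((hline z).continuousAt.eventually (hΩ.mem_nhds (hxΩ z hz))).mono
      fun w hw => hK _ hw
  simpa only [comp_def, zero_smul, add_zero] using this

theorem exists_nhds_dividesPowers (hαβ : α < β) (hΩ : IsOpen Ω) (hQ : AnalyticOnNhd ℂ Q Ω)
    (hQ_ne : ∀ x ∈ Ω, ¬∀ᶠ y in 𝓝 x, Q y = 0) {p : Fin N → ℂ} (hp : p ∈ Ω) :
    ∃ O, IsOpen O ∧ p ∈ O ∧ ∃ c > 0, DividesPowers α β Q Ω O c := by
  obtain ⟨u, c, hc, hu⟩ := exists_eventually_le_norm_add_smul hΩ hQ hp (hQ_ne p hp)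
  obtain ⟨O, hOu, hO, hpO⟩ := _root_.eventually_nhds_iff.1 hu
  have hmem {x : Fin N → ℂ} (hx : x ∈ O) {z : ℂ} (hz : z ∈ sphere 0 1) : x + z • u ∈ Ω :=
    (hOu x hx).1 z (sphere_subset_closedBall hz)
  have hne {x : Fin N → ℂ} (hx : x ∈ O) {z : ℂ} (hz : z ∈ sphere 0 1) : Q (x + z • u) ≠ 0 :=
    norm_pos_iff.1 (hc.trans_le ((hOu x hx).2 z hz))
  have hOΩ : O ⊆ Ω := fun x hx => by simpa using (hOu x hx).1 0 (by simp)
  refine ⟨O, hO, hpO, c⁻¹, inv_pos.2 hc, fun n h M K hh hM hK => ?_⟩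
  have hq := analyticOnNhd_circleIntegral_add_smul (χ := fun y => h y / Q y ^ n) (u := u) hO
    fun x hx z hz => (hh _ (hmem hx hz)).fun_div ((hQ _ (hmem hx hz)).fun_pow n)
      (pow_ne_zero n (hne hx hz))
  have hhq := fun x (hx : x ∈ O) => eq_pow_mul_circleIntegral_add_smul hαβ hΩ hQ hh hK
    (hOu x hx).1 fun z hz => hne hx hz
  have hdiv := eqOn_divPow hO (fun x hx => hQ_ne x (hOΩ hx)) hq.continuousOn hhq
  refine ⟨hq.congr hO hdiv.symm, fun x hx => ?_⟩
  rw [hdiv hx]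
  refine ⟨hhq x hx, norm_two_pi_I_inv_smul_circleIntegral_le fun z hz => ?_⟩
  have hQz := (hOu x hx).2 z hz
  have hM₀ := (norm_nonneg _).trans (hM _ (hmem hx hz))
  rw [norm_div, norm_pow, inv_pow, ← div_eq_mul_inv]
  gcongr
  exact hM _ (hmem hx hz)

theorem exists_dividesPowers_of_isCompact (hαβ : α < β) (hΩ : IsOpen Ω)
    (hQ : AnalyticOnNhd ℂ Q Ω) (hQ_ne : ∀ x ∈ Ω, ¬∀ᶠ y in 𝓝 x, Q y = 0) {L : Set (Fin N → ℂ)}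
    (hL : IsCompact L) (hLΩ : L ⊆ Ω) :
    ∃ O, IsOpen O ∧ L ⊆ O ∧ ∃ c > 0, DividesPowers α β Q Ω O c := by
  refine hL.induction_on (p := fun L => ∃ O, IsOpen O ∧ L ⊆ O ∧ ∃ c > 0,
    DividesPowers α β Q Ω O c) ?_ ?_ ?_ fun p hp => ?_
  · exact ⟨∅, isOpen_empty, subset_rfl, 1, one_pos, fun n h M K _ _ _ => by simp⟩
  · exact fun s t hst ⟨O, hO, htO, hc⟩ => ⟨O, hO, hst.trans htO, hc⟩
  · rintro s t ⟨O₁, hO₁, hsO, c₁, hc₁, hdiv₁⟩ ⟨O₂, hO₂, htO, c₂, hc₂, hdiv₂⟩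
    exact ⟨O₁ ∪ O₂, hO₁.union hO₂, union_subset_union hsO htO, max c₁ c₂, lt_max_of_lt_left hc₁,
      hdiv₁.union hc₁ hdiv₂ hc₂⟩
  · obtain ⟨O, hO, hpO, hdiv⟩ := exists_nhds_dividesPowers hαβ hΩ hQ hQ_ne (hLΩ hp)
    exact ⟨O, mem_nhdsWithin_of_mem_nhds (hO.mem_nhds hpO), O, hO, subset_rfl, hdiv⟩

end Division

section Expansions

variable {N : ℕ} {γ : ℕ → ℝ}

/-- The sequence `M` is bounded by `C Aⁿ γₙ` for some constants `C` and `A`. -/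
def IsGeomBounded (γ M : ℕ → ℝ) : Prop :=
  ∃ C A : ℝ, 0 < C ∧ 0 < A ∧ ∀ n, M n ≤ C * A ^ n * γ n

theorem IsGeomBounded.add (hγ : ∀ n, 0 < γ n) {M₁ M₂ : ℕ → ℝ} (h₁ : IsGeomBounded γ M₁)
    (h₂ : IsGeomBounded γ M₂) : IsGeomBounded γ fun n => M₁ n + M₂ n := by
  obtain ⟨C₁, A₁, hC₁, hA₁, hle₁⟩ := h₁
  obtain ⟨C₂, A₂, hC₂, hA₂, hle₂⟩ := h₂
  refine ⟨C₁ + C₂, max A₁ A₂, by positivity, by positivity, fun n => ?_⟩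
  have := hγ n
  calc M₁ n + M₂ n ≤ C₁ * A₁ ^ n * γ n + C₂ * A₂ ^ n * γ n := add_le_add (hle₁ n) (hle₂ n)
    _ ≤ C₁ * max A₁ A₂ ^ n * γ n + C₂ * max A₁ A₂ ^ n * γ n := by
      gcongr
      · exact le_max_left _ _
      · exact le_max_right _ _
    _ = (C₁ + C₂) * max A₁ A₂ ^ n * γ n := by ring

theorem IsGeomBounded.const_mul_pow_mul {M : ℕ → ℝ} (hM : IsGeomBounded γ M) {c b : ℝ}
    (hc : 0 < c) (hb : 0 < b) : IsGeomBounded γ fun n => c * b ^ n * M n := by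
  obtain ⟨C, A, hC, hA, hle⟩ := hM
  refine ⟨c * C, b * A, by positivity, by positivity, fun n => ?_⟩
  calc c * b ^ n * M n ≤ c * b ^ n * (C * A ^ n * γ n) := by gcongr; exact hle n
    _ = c * C * (b * A) ^ n * γ n := by ring

/-- `F` has on `S` a `Q`-asymptotic expansion with weights `γ`, whose partial sums are holomorphic
on `D`; for `γ n = Γ(sn + 1)` this is a `Q`-`s`-Gevrey expansion in the estimate sense. -/
def HasExpansionOn (γ : ℕ → ℝ) (Q F : (Fin N → ℂ) → ℂ) (S D : Set (Fin N → ℂ)) : Prop :=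
  ∃ g : ℕ → (Fin N → ℂ) → ℂ, ∃ C A : ℝ, 0 < C ∧ 0 < A ∧ (∀ n, AnalyticOnNhd ℂ (g n) D) ∧
    (∀ n, ∀ v ∈ D, ‖g n v‖ ≤ C * A ^ n * γ n) ∧
    ∀ n, ∀ v ∈ S, ‖F v - g n v‖ ≤ C * A ^ n * γ n * ‖Q v‖ ^ n

/-- The functions `g n` are holomorphic and bounded by `M n` on `D`, and they approximate `F` on `S`
up to `M n * ‖Q‖ ^ n`. -/
structure Approximates (M : ℕ → ℝ) (Q F : (Fin N → ℂ) → ℂ) (S D : Set (Fin N → ℂ))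
    (g : ℕ → (Fin N → ℂ) → ℂ) : Prop where
  analyticOnNhd : ∀ n, AnalyticOnNhd ℂ (g n) D
  norm_le : ∀ n, ∀ v ∈ D, ‖g n v‖ ≤ M n
  norm_sub_le : ∀ n, ∀ v ∈ S, ‖F v - g n v‖ ≤ M n * ‖Q v‖ ^ n

variable {M M₁ M₂ : ℕ → ℝ} {Q F : (Fin N → ℂ) → ℂ} {S S₁ S₂ D D₁ D₂ : Set (Fin N → ℂ)}
  {g g₁ g₂ : ℕ → (Fin N → ℂ) → ℂ}

theorem HasExpansionOn.exists_approximates (hγ : ∀ n, 0 < γ n) (h : HasExpansionOn γ Q F S D) :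
    ∃ g M, IsGeomBounded γ M ∧ (∀ n, 0 ≤ M n) ∧ Approximates M Q F S D g := by
  obtain ⟨g, C, A, hC, hA, han, hle, hsub⟩ := h
  refine ⟨g, _, ⟨C, A, hC, hA, fun n => le_rfl⟩, fun n => ?_, han, hle, hsub⟩
  have := hγ n
  positivity

theorem Approximates.hasExpansionOn (hg : Approximates M Q F S D g) (hM : IsGeomBounded γ M) :
    HasExpansionOn γ Q F S D := by
  obtain ⟨C, A, hC, hA, hle⟩ := hM
  refine ⟨g, C, A, hC, hA, hg.analyticOnNhd, fun n v hv => (hg.norm_le n v hv).trans (hle n),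
    fun n v hv => (hg.norm_sub_le n v hv).trans ?_⟩
  gcongr
  exact hle n

theorem Approximates.mono (h : Approximates M Q F S D g) (hM : ∀ n, M n ≤ M₁ n) (hS : S₁ ⊆ S)
    (hD : D₁ ⊆ D) : Approximates M₁ Q F S₁ D₁ g where
  analyticOnNhd n := (h.analyticOnNhd n).mono hD
  norm_le n v hv := (h.norm_le n v (hD hv)).trans (hM n)
  norm_sub_le n v hv := (h.norm_sub_le n v (hS hv)).trans (by gcongr; exact hM n)

theorem HasExpansionOn.mono (h : HasExpansionOn γ Q F S D) (hS : S₁ ⊆ S) (hD : D₁ ⊆ D) :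
    HasExpansionOn γ Q F S₁ D₁ := by
  obtain ⟨g, C, A, hC, hA, han, hle, hsub⟩ := h
  exact ⟨g, C, A, hC, hA, fun n => (han n).mono hD, fun n v hv => hle n v (hD hv),
    fun n v hv => hsub n v (hS hv)⟩

theorem Approximates.sub_pow_mul {m : ℕ → ℝ} {B : ℝ} {q : ℕ → (Fin N → ℂ) → ℂ}
    (h : Approximates M Q F S D g) (hSD : S ⊆ D) (hQ : AnalyticOnNhd ℂ Q D)
    (hB : ∀ v ∈ D, ‖Q v‖ ≤ B) (hq : ∀ n, AnalyticOnNhd ℂ (q n) D)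
    (hqm : ∀ n, ∀ v ∈ D, ‖q n v‖ ≤ m n) :
    Approximates (fun n => M n + (1 + B) ^ n * m n) Q F S D fun n v => g n v - Q v ^ n * q n v where
  analyticOnNhd n v hv :=
    (h.analyticOnNhd n v hv).fun_sub (((hQ v hv).fun_pow n).fun_mul (hq n v hv))
  norm_le n v hv := by
    have hm := hqm n v hv
    have hQv := (hB v hv).trans (le_add_of_nonneg_left zero_le_one)
    refine (_root_.norm_sub_le _ _).trans (add_le_add (h.norm_le n v hv) ?_)
    rw [norm_mul, norm_pow]
    have := (norm_nonneg _).trans hQv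
    gcongr
  norm_sub_le n v hv := by
    have hm := hqm n v (hSD hv)
    have hm₀ := (norm_nonneg _).trans hm
    have hB₁ : 1 ≤ 1 + B := le_add_of_nonneg_right ((norm_nonneg _).trans (hB v (hSD hv)))
    calc ‖F v - (g n v - Q v ^ n * q n v)‖ = ‖F v - g n v + Q v ^ n * q n v‖ := by
          rw [sub_sub_eq_add_sub, add_sub_right_comm]
      _ ≤ M n * ‖Q v‖ ^ n + ‖Q v‖ ^ n * m n := by
          refine (norm_add_le _ _).trans (add_le_add (h.norm_sub_le n v hv) ?_)
          rw [norm_mul, norm_pow]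
          gcongr
      _ ≤ (M n + (1 + B) ^ n * m n) * ‖Q v‖ ^ n := by
          rw [mul_comm _ (m n), add_mul]
          gcongr
          exact le_mul_of_one_le_left hm₀ (one_le_pow₀ hB₁)

theorem Approximates.union (h₁ : Approximates M Q F S₁ D₁ g₁) (h₂ : Approximates M Q F S₂ D₂ g₂)
    (hD₁ : IsOpen D₁) (hD₂ : IsOpen D₂) (hS₁ : S₁ ⊆ D₁) (hS₂ : S₂ ⊆ D₂)
    (heq : ∀ n, EqOn (g₁ n) (g₂ n) (D₁ ∩ D₂)) :
    ∃ g, Approximates M Q F (S₁ ∪ S₂) (D₁ ∪ D₂) g := by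
  classical
  have hg₁ (n : ℕ) : EqOn (D₁.piecewise (g₁ n) (g₂ n)) (g₁ n) D₁ := piecewise_eqOn _ _ _
  have hg₂ (n : ℕ) : EqOn (D₁.piecewise (g₁ n) (g₂ n)) (g₂ n) D₂ := fun v hv => by
    by_cases hv₁ : v ∈ D₁
    · rw [piecewise_eq_of_mem _ _ _ hv₁, heq n ⟨hv₁, hv⟩]
    · rw [piecewise_eq_of_notMem _ _ _ hv₁]
  refine ⟨fun n => D₁.piecewise (g₁ n) (g₂ n), ⟨fun n v hv => ?_, fun n v hv => ?_,
    fun n v hv => ?_⟩⟩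
  · exact hv.elim ((h₁.analyticOnNhd n).congr hD₁ (hg₁ n).symm v)
      ((h₂.analyticOnNhd n).congr hD₂ (hg₂ n).symm v)
  · rcases hv with hv | hv
    · exact hg₁ n hv ▸ h₁.norm_le n v hv
    · exact hg₂ n hv ▸ h₂.norm_le n v hv
  · rcases hv with hv | hv
    · exact hg₁ n (hS₁ hv) ▸ h₁.norm_sub_le n v hv
    · exact hg₂ n (hS₂ hv) ▸ h₂.norm_sub_le n v hv

theorem Approximates.hasExpansionOn_union {m : ℕ → ℝ} {q₁ q₂ : ℕ → (Fin N → ℂ) → ℂ} {B : ℝ}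
    (hγ : ∀ n, 0 < γ n) (hM₁ : IsGeomBounded γ M₁) (hM₂ : IsGeomBounded γ M₂)
    (hm : IsGeomBounded γ m) (hM₁₀ : ∀ n, 0 ≤ M₁ n) (hM₂₀ : ∀ n, 0 ≤ M₂ n)
    (h₁ : Approximates M₁ Q F S₁ D₁ g₁) (h₂ : Approximates M₂ Q F S₂ D₂ g₂)
    (hD₁ : IsOpen D₁) (hD₂ : IsOpen D₂) (hS₁ : S₁ ⊆ D₁) (hS₂ : S₂ ⊆ D₂)
    (hQ : AnalyticOnNhd ℂ Q (D₁ ∪ D₂)) (hB : ∀ v ∈ D₁ ∪ D₂, ‖Q v‖ ≤ B)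
    (hq₁ : ∀ n, AnalyticOnNhd ℂ (q₁ n) D₁) (hq₂ : ∀ n, AnalyticOnNhd ℂ (q₂ n) D₂)
    (hqm₁ : ∀ n, ∀ v ∈ D₁, ‖q₁ n v‖ ≤ m n) (hqm₂ : ∀ n, ∀ v ∈ D₂, ‖q₂ n v‖ ≤ m n)
    (heq : ∀ n, ∀ v ∈ D₁ ∩ D₂, g₁ n v - g₂ n v = Q v ^ n * (q₁ n v + q₂ n v)) :
    HasExpansionOn γ Q F (S₁ ∪ S₂) (D₁ ∪ D₂) := by
  have hB' : ∀ v ∈ D₁ ∪ D₂, ‖Q v‖ ≤ |B| := fun v hv => (hB v hv).trans (le_abs_self B)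
  have hcorr₁ := h₁.sub_pow_mul hS₁ (hQ.mono subset_union_left)
    (fun v hv => hB' v (subset_union_left hv)) hq₁ hqm₁
  have hcorr₂ := h₂.sub_pow_mul (q := fun n v => -q₂ n v) hS₂ (hQ.mono subset_union_right)
    (fun v hv => hB' v (subset_union_right hv)) (fun n => (hq₂ n).neg)
    fun n v hv => (norm_neg _).trans_le (hqm₂ n v hv)
  have hcorr₁' := hcorr₁.mono (M₁ := fun n => M₁ n + M₂ n + 1 * (1 + |B|) ^ n * m n)
    (fun n => by linarith [hM₂₀ n]) subset_rfl subset_rfl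
  have hcorr₂' := hcorr₂.mono (M₁ := fun n => M₁ n + M₂ n + 1 * (1 + |B|) ^ n * m n)
    (fun n => by linarith [hM₁₀ n]) subset_rfl subset_rfl
  obtain ⟨g, hg⟩ := hcorr₁'.union hcorr₂' hD₁ hD₂ hS₁ hS₂ fun n v hv => by
    linear_combination heq n v hv
  exact hg.hasExpansionOn ((hM₁.add hγ hM₂).add hγ (hm.const_mul_pow_mul one_pos (by positivity)))

end Expansions

section Merging

theorem norm_le_mul_pow_of_dense {X : Type*} [TopologicalSpace X] {D T : Set X} {Q h : X → ℂ}
    {α β K : ℝ} {n : ℕ} (hD : IsOpen D) (hQ : ContinuousOn Q D) (hh : ContinuousOn h D)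
    (hT : Dense T) (hK : ∀ v ∈ T, v ∈ D → Q v ∈ sector α β → ‖h v‖ ≤ K * ‖Q v‖ ^ n) :
    ∀ v ∈ D, Q v ∈ sector α β → ‖h v‖ ≤ K * ‖Q v‖ ^ n := by
  intro v hv hQv
  have hD_nhds : ∀ᶠ w in 𝓝 v, w ∈ D := hD.mem_nhds hv
  have hQ_at : ContinuousAt Q v := hQ.continuousAt hD_nhds
  refine le_of_tendsto_of_tendsto_of_frequently (hh.continuousAt hD_nhds).norm
    ((hQ_at.norm.fun_pow n).const_mul K) ?_
  exact ((mem_closure_iff_frequently.1 (hT v)).and_eventually (hD_nhds.and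
    (hQ_at.eventually ((isOpen_sector α β).mem_nhds hQv)))).mono fun w hw => hK w hw.1 hw.2.1 hw.2.2

variable {n : ℕ}

theorem exists_tube_subset {K : Set ℂ} (hK : IsCompact K) {O : Set (Fin (n + 1) → ℂ)}
    (hO : IsOpen O) (hKO : ∀ t ∈ K, update (0 : Fin (n + 1) → ℂ) 0 t ∈ O) :
    ∃ V, IsOpen V ∧ K ⊆ V ∧ ∃ r > 0, tube n V r ⊆ O := by
  obtain ⟨δ, hδ, hδO⟩ := (hK.image (f := fun t => update (0 : Fin (n + 1) → ℂ) 0 t)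
    (by fun_prop)).exists_thickening_subset_open hO (image_subset_iff.2 hKO)
  refine ⟨thickening δ K, isOpen_thickening, self_subset_thickening hδ K, δ, hδ,
    fun v hv => hδO ?_⟩
  obtain ⟨t, ht, hvt⟩ := mem_thickening_iff.1 hv.1
  refine mem_thickening_iff.2 ⟨_, mem_image_of_mem _ ht, (dist_pi_lt_iff hδ).2 fun j => ?_⟩
  rcases eq_or_ne j 0 with rfl | hj
  · simpa using hvt
  · simpa [hj] using hv.2 j hj

/-- The standing hypotheses of the gluing argument: `Q` is bounded holomorphic and nowhere locally
zero on `Ω`, and a dense set of the points of `Ω` where `Q` lies in the sector belongs to the set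
`S` of points where asymptotic estimates are imposed. -/
structure IsSectorialOn (α β : ℝ) (Q : (Fin (n + 1) → ℂ) → ℂ) (S Ω : Set (Fin (n + 1) → ℂ)) :
    Prop where
  lt : α < β
  analyticOnNhd : AnalyticOnNhd ℂ Q Ω
  exists_norm_le : ∃ B, ∀ v ∈ Ω, ‖Q v‖ ≤ B
  not_eventually_eq_zero : ∀ v ∈ Ω, ¬∀ᶠ w in 𝓝 v, Q w = 0
  dense : Dense {v | v ∈ Ω → Q v ∈ sector α β → v ∈ S}

variable {α β : ℝ} {γ M₁ M₂ : ℕ → ℝ} {Q F : (Fin (n + 1) → ℂ) → ℂ}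
  {S Ω D D₁ D₂ : Set (Fin (n + 1) → ℂ)} {g₁ g₂ : ℕ → (Fin (n + 1) → ℂ) → ℂ}

theorem Approximates.norm_sub_le_mul_pow (hQ : IsSectorialOn α β Q S Ω) (hD : IsOpen D)
    (hDΩ : D ⊆ Ω) (h₁ : Approximates M₁ Q F (S ∩ D) D g₁) (h₂ : Approximates M₂ Q F (S ∩ D) D g₂)
    (k : ℕ) : ∀ v ∈ D, Q v ∈ sector α β → ‖g₁ k v - g₂ k v‖ ≤ (M₁ k + M₂ k) * ‖Q v‖ ^ k := by
  refine norm_le_mul_pow_of_dense hD (hQ.analyticOnNhd.mono hDΩ).continuousOn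
    ((h₁.analyticOnNhd k).sub (h₂.analyticOnNhd k)).continuousOn hQ.dense
    fun v hv hvD hQv => ?_
  have hvS : v ∈ S ∩ D := ⟨hv (hDΩ hvD) hQv, hvD⟩
  calc ‖g₁ k v - g₂ k v‖ = ‖(F v - g₂ k v) - (F v - g₁ k v)‖ := by rw [sub_sub_sub_cancel_left]
    _ ≤ ‖F v - g₂ k v‖ + ‖F v - g₁ k v‖ := _root_.norm_sub_le _ _
    _ ≤ M₂ k * ‖Q v‖ ^ k + M₁ k * ‖Q v‖ ^ k :=
      add_le_add (h₂.norm_sub_le k v hvS) (h₁.norm_sub_le k v hvS)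
    _ = (M₁ k + M₂ k) * ‖Q v‖ ^ k := by ring

theorem exists_tube_sub_eq_pow_mul (hQ : IsSectorialOn α β Q S Ω) {K V₀ : Set ℂ}
    (hK : IsCompact K) (hV₀ : IsOpen V₀) (hKV₀ : K ⊆ V₀) {r₀ : ℝ} (hr₀ : 0 < r₀)
    (hΩ : tube n V₀ r₀ ⊆ Ω) (h₁ : Approximates M₁ Q F (S ∩ tube n V₀ r₀) (tube n V₀ r₀) g₁)
    (h₂ : Approximates M₂ Q F (S ∩ tube n V₀ r₀) (tube n V₀ r₀) g₂) :
    ∃ V, IsOpen V ∧ K ⊆ V ∧ ∃ r > 0, ∃ c > 0, ∃ q : ℕ → (Fin (n + 1) → ℂ) → ℂ,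
      ∀ k, AnalyticOnNhd ℂ (q k) (tube n V r) ∧ ∀ v ∈ tube n V r,
        g₁ k v - g₂ k v = Q v ^ k * q k v ∧ ‖q k v‖ ≤ (M₁ k + M₂ k) * c ^ k := by
  have hD : IsOpen (tube n V₀ r₀) := isOpen_tube hV₀ r₀
  have hKD : ∀ t ∈ K, update (0 : Fin (n + 1) → ℂ) 0 t ∈ tube n V₀ r₀ := fun t ht =>
    update_zero_mem_tube (U := {0}) ⟨rfl, fun j _ => by simpa using hr₀⟩ (hKV₀ ht)
  obtain ⟨O, hO, hKO, c, hc, hdiv⟩ := exists_dividesPowers_of_isCompact hQ.lt hD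
    (hQ.analyticOnNhd.mono hΩ) (fun v hv => hQ.not_eventually_eq_zero v (hΩ hv))
    (hK.image (f := fun t => update (0 : Fin (n + 1) → ℂ) 0 t) (by fun_prop))
    (image_subset_iff.2 hKD)
  obtain ⟨V, hV, hKV, r, hr, hVO⟩ := exists_tube_subset hK hO (image_subset_iff.1 hKO)
  refine ⟨V, hV, hKV, r, hr, c, hc, fun k => divPow Q k fun v => g₁ k v - g₂ k v, fun k => ?_⟩
  obtain ⟨hq, hq_eq⟩ := hdiv k _ (M₁ k + M₂ k) (M₁ k + M₂ k)
    ((h₁.analyticOnNhd k).sub (h₂.analyticOnNhd k))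
    (fun v hv => norm_sub_le_of_le (h₁.norm_le k v hv) (h₂.norm_le k v hv))
    (h₁.norm_sub_le_mul_pow hQ hD hΩ h₂ k)
  exact ⟨hq.mono hVO, fun v hv => hq_eq v (hVO hv)⟩

theorem HasExpansionOn.exists_merge (hQ : IsSectorialOn α β Q S Ω) (hγ : ∀ k, 0 < γ k)
    (hD₁ : IsOpen D₁) (hD₂ : IsOpen D₂) (hD₁Ω : D₁ ⊆ Ω) (hD₂Ω : D₂ ⊆ Ω)
    (h₁ : HasExpansionOn γ Q F (S ∩ D₁) D₁) (h₂ : HasExpansionOn γ Q F (S ∩ D₂) D₂)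
    {C₁ C₂ V₀ : Set ℂ} (hC₁ : IsClosed C₁) (hC₂ : IsClosed C₂) (hC : IsCompact (C₁ ∩ C₂))
    (hV₀ : IsOpen V₀) (hCV₀ : C₁ ∩ C₂ ⊆ V₀) {r₀ : ℝ} (hr₀ : 0 < r₀)
    (hVD : tube n V₀ r₀ ⊆ D₁ ∩ D₂) :
    ∃ S₁ S₂, IsOpen S₁ ∧ IsOpen S₂ ∧ C₁ ⊆ S₁ ∧ C₂ ⊆ S₂ ∧ ∃ r > 0,
      HasExpansionOn γ Q F (S ∩ (D₁ ∩ tube n S₁ r ∪ D₂ ∩ tube n S₂ r))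
        (D₁ ∩ tube n S₁ r ∪ D₂ ∩ tube n S₂ r) := by
  have hDΩ {T₁ T₂ : Set (Fin (n + 1) → ℂ)} : D₁ ∩ T₁ ∪ D₂ ∩ T₂ ⊆ Ω :=
    union_subset (inter_subset_left.trans hD₁Ω) (inter_subset_left.trans hD₂Ω)
  obtain ⟨B, hB⟩ := hQ.exists_norm_le
  obtain ⟨g₁, M₁, hM₁, hM₁₀, hg₁⟩ := h₁.exists_approximates hγ
  obtain ⟨g₂, M₂, hM₂, hM₂₀, hg₂⟩ := h₂.exists_approximates hγ
  have hV₁ : tube n V₀ r₀ ⊆ D₁ := hVD.trans inter_subset_left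
  have hV₂ : tube n V₀ r₀ ⊆ D₂ := hVD.trans inter_subset_right
  obtain ⟨V, hV, hCV, r, hr, c, hc, q, hq⟩ := exists_tube_sub_eq_pow_mul hQ hC hV₀ hCV₀ hr₀
    (hV₁.trans hD₁Ω) (hg₁.mono (fun k => le_rfl) (inter_subset_inter_right S hV₁) hV₁)
    (hg₂.mono (fun k => le_rfl) (inter_subset_inter_right S hV₂) hV₂)
  obtain ⟨S₁, S₂, hS₁, hS₂, hCS₁, hCS₂, hSV, a, ha, hsplit⟩ :=
    exists_additive_splitting hC₁ hC₂ hC hV hCV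
  have hM₀ (k : ℕ) : 0 ≤ (M₁ k + M₂ k) * c ^ k :=
    mul_nonneg (add_nonneg (hM₁₀ k) (hM₂₀ k)) (pow_nonneg hc.le k)
  choose q₁ q₂ hq₁ hq₂ hqm₁ hqm₂ hadd using fun k =>
    hsplit n (q k) r _ (hM₀ k) (hq k).1 fun v hv => ((hq k).2 v hv).2
  have hm : IsGeomBounded γ fun k => a * ((M₁ k + M₂ k) * c ^ k) := by
    simpa only [mul_assoc, mul_comm (c ^ _)] using
      (hM₁.add hγ hM₂).const_mul_pow_mul ha hc
  have hunion := Approximates.hasExpansionOn_union (S₁ := S ∩ (D₁ ∩ tube n S₁ r))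
    (S₂ := S ∩ (D₂ ∩ tube n S₂ r)) hγ hM₁ hM₂ hm hM₁₀ hM₂₀
    (hg₁.mono (fun k => le_rfl) (inter_subset_inter_right S inter_subset_left) inter_subset_left)
    (hg₂.mono (fun k => le_rfl) (inter_subset_inter_right S inter_subset_left) inter_subset_left)
    (hD₁.inter (isOpen_tube hS₁ r)) (hD₂.inter (isOpen_tube hS₂ r)) inter_subset_right
    inter_subset_right (hQ.analyticOnNhd.mono hDΩ) (fun v hv => hB v (hDΩ hv))
    (fun k => (hq₁ k).mono inter_subset_right) (fun k => (hq₂ k).mono inter_subset_right)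
    (fun k v hv => hqm₁ k v hv.2) (fun k v hv => hqm₂ k v hv.2) fun k v hv => ?_
  · exact ⟨S₁, S₂, hS₁, hS₂, hCS₁, hCS₂, r, hr, inter_union_distrib_left S _ _ ▸ hunion⟩
  · have hvS : v ∈ tube n (S₁ ∩ S₂) r := ⟨⟨hv.1.2.1, hv.2.2.1⟩, hv.1.2.2⟩
    rw [hadd k v hvS]
    exact ((hq k).2 v (tube_mono hSV le_rfl hvS)).1

/-- `F` has an expansion on a tube around `K × {0}`. -/
def HasExpansionNear (γ : ℕ → ℝ) (Q F : (Fin (n + 1) → ℂ) → ℂ) (S Ω : Set (Fin (n + 1) → ℂ))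
    (K : Set ℂ) : Prop :=
  ∃ U, IsOpen U ∧ K ⊆ U ∧ ∃ r > 0, tube n U r ⊆ Ω ∧
    HasExpansionOn γ Q F (S ∩ tube n U r) (tube n U r)

theorem tube_inter_subset_inter_tube {U V : Set ℂ} {r r₁ r₂ : ℝ} (hr₁ : r ≤ r₁) (hr₂ : r ≤ r₂) :
    tube n (U ∩ V) r ⊆ tube n U r₁ ∩ tube n V r₂ :=
  subset_inter (tube_mono inter_subset_left hr₁) (tube_mono inter_subset_right hr₂)

theorem tube_union (U V : Set ℂ) (r : ℝ) : tube n (U ∪ V) r = tube n U r ∪ tube n V r := by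
  ext v
  exact or_and_right

theorem HasExpansionNear.mono {K K' : Set ℂ} (h : HasExpansionNear γ Q F S Ω K) (hK : K' ⊆ K) :
    HasExpansionNear γ Q F S Ω K' := by
  obtain ⟨U, hU, hKU, h⟩ := h
  exact ⟨U, hU, hK.trans hKU, h⟩

theorem HasExpansionNear.union (hQ : IsSectorialOn α β Q S Ω) (hγ : ∀ k, 0 < γ k) {K₁ K₂ : Set ℂ}
    (hK₁ : IsCompact K₁) (hK₂ : IsCompact K₂) (h₁ : HasExpansionNear γ Q F S Ω K₁)
    (h₂ : HasExpansionNear γ Q F S Ω K₂) : HasExpansionNear γ Q F S Ω (K₁ ∪ K₂) := by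
  obtain ⟨U₁, hU₁, hKU₁, r₁, hr₁, hΩ₁, hexp₁⟩ := h₁
  obtain ⟨U₂, hU₂, hKU₂, r₂, hr₂, hΩ₂, hexp₂⟩ := h₂
  obtain ⟨S₁, S₂, hS₁, hS₂, hKS₁, hKS₂, r, hr, hexp⟩ := HasExpansionOn.exists_merge hQ hγ
    (isOpen_tube hU₁ r₁) (isOpen_tube hU₂ r₂) hΩ₁ hΩ₂ hexp₁ hexp₂ hK₁.isClosed hK₂.isClosed
    (hK₁.inter hK₂) (hU₁.inter hU₂) (inter_subset_inter hKU₁ hKU₂) (lt_min hr₁ hr₂)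
    (tube_inter_subset_inter_tube (min_le_left _ _) (min_le_right _ _))
  set ρ := min r (min r₁ r₂)
  have hρr : ρ ≤ r := min_le_left _ _
  have hρ₁ : ρ ≤ r₁ := (min_le_right _ _).trans (min_le_left _ _)
  have hρ₂ : ρ ≤ r₂ := (min_le_right _ _).trans (min_le_right _ _)
  have htube : tube n (U₁ ∩ S₁ ∪ U₂ ∩ S₂) ρ ⊆
      tube n U₁ r₁ ∩ tube n S₁ r ∪ tube n U₂ r₂ ∩ tube n S₂ r := by
    rw [tube_union]
    exact union_subset_union (tube_inter_subset_inter_tube hρ₁ hρr)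
      (tube_inter_subset_inter_tube hρ₂ hρr)
  refine ⟨U₁ ∩ S₁ ∪ U₂ ∩ S₂, (hU₁.inter hS₁).union (hU₂.inter hS₂), union_subset_union
    (subset_inter hKU₁ hKS₁) (subset_inter hKU₂ hKS₂), ρ, lt_min hr (lt_min hr₁ hr₂),
    htube.trans (union_subset (inter_subset_left.trans hΩ₁) (inter_subset_left.trans hΩ₂)),
    hexp.mono (inter_subset_inter_right S htube) htube⟩

theorem hasExpansionNear_of_isCompact (hQ : IsSectorialOn α β Q S Ω) (hγ : ∀ k, 0 < γ k)
    (hlocal : ∀ t : ℂ, HasExpansionNear γ Q F S Ω {t}) {K : Set ℂ} (hK : IsCompact K) :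
    HasExpansionNear γ Q F S Ω K := by
  suffices ∃ K', IsCompact K' ∧ K ⊆ K' ∧ HasExpansionNear γ Q F S Ω K' by
    obtain ⟨K', -, hKK', h⟩ := this
    exact h.mono hKK'
  refine hK.induction_on (p := fun K => ∃ K', IsCompact K' ∧ K ⊆ K' ∧
    HasExpansionNear γ Q F S Ω K') ?_ ?_ ?_ fun t _ => ?_
  · exact ⟨∅, isCompact_empty, subset_rfl, (hlocal 0).mono (empty_subset _)⟩
  · exact fun s t hst ⟨K', hK', htK', h⟩ => ⟨K', hK', hst.trans htK', h⟩
  · rintro s t ⟨K₁, hK₁, hsK₁, h₁⟩ ⟨K₂, hK₂, htK₂, h₂⟩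
    exact ⟨K₁ ∪ K₂, hK₁.union hK₂, union_subset_union hsK₁ htK₂, h₁.union hQ hγ hK₁ hK₂ h₂⟩
  · obtain ⟨U, hU, htU, h⟩ := hlocal t
    obtain ⟨ε, hε, hεU⟩ := nhds_basis_closedBall.mem_iff.1 (hU.mem_nhds (htU rfl))
    exact ⟨closedBall t ε, mem_nhdsWithin_of_mem_nhds (closedBall_mem_nhds t hε), closedBall t ε,
      isCompact_closedBall t ε, subset_rfl, U, hU, hεU, h⟩

end Merging

section Polydisks

variable {m n : ℕ} {γ : ℕ → ℝ} {α β r : ℝ}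

theorem polydisk_mono {r' : ℝ} (h : r ≤ r') : polydisk n r ⊆ polydisk n r' :=
  fun _ hx j => (hx j).trans_le h

theorem polydisk_eq_ball (hr : 0 < r) : polydisk n r = ball 0 r := by
  ext x
  rw [mem_ball_zero_iff, pi_norm_lt_iff hr]
  rfl

theorem polydisk_succ_eq_tube (r : ℝ) : polydisk (n + 1) r = tube n (ball 0 r) r := by
  ext x
  simp only [tube, polydisk, mem_ofPred_eq, mem_ball_zero_iff]
  exact ⟨fun h => ⟨h 0, fun j _ => h j⟩, fun h j => if hj : j = 0 then hj ▸ h.1 else h.2 j hj⟩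

theorem isOpen_polydisk (n : ℕ) (r : ℝ) : IsOpen (polydisk n r) := by
  simp only [polydisk, ofPred_forall]
  exact isOpen_iInter_of_finite fun j => isOpen_lt (by fun_prop) continuous_const

theorem exists_mapsTo_polydisk {b : (Fin m → ℂ) → Fin n → ℂ} (hb : Continuous b) (hb₀ : b 0 = 0)
    {ε : ℝ} (hε : 0 < ε) : ∃ r > 0, MapsTo b (polydisk m r) (polydisk n ε) := by
  obtain ⟨r, hr, h⟩ := Metric.mem_nhds_iff.1 (hb.continuousAt.preimage_mem_nhds
    ((isOpen_polydisk n ε).mem_nhds (x := b 0) fun j => by simpa [hb₀] using hε))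
  exact ⟨r, hr, (polydisk_eq_ball hr).subset.trans h⟩

theorem dense_forall_apply_ne_zero (n : ℕ) : Dense {v : Fin n → ℂ | ∀ j, v j ≠ 0} := by
  simpa [Set.pi] using
    dense_pi (univ : Set (Fin n)) (s := fun _ => {0}ᶜ) fun j _ => dense_compl_singleton (0 : ℂ)

theorem dense_apply_ne_zero (i : Fin n) : Dense {v : Fin n → ℂ | v i ≠ 0} :=
  (dense_forall_apply_ne_zero n).mono (ofPred_subset_ofPred.2 fun _ hv => hv i)

variable {P f : (Fin n → ℂ) → ℂ}

theorem mem_PSector {x : Fin n → ℂ} :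
    x ∈ PSector n P α β r ↔ (∀ j, x j ≠ 0) ∧ x ∈ polydisk n r ∧ P x ∈ sector α β := by
  simp only [PSector, polydisk, sector, mem_ofPred_eq, forall_and, norm_pos_iff, and_assoc]

theorem PSector_subset_polydisk : PSector n P α β r ⊆ polydisk n r :=
  fun _ hx => (mem_PSector.1 hx).2.1

theorem isOpen_PSector (hP : ContinuousOn P (polydisk n r)) : IsOpen (PSector n P α β r) := by
  have : PSector n P α β r =
      (⋂ j, {x | x j ≠ 0}) ∩ (polydisk n r ∩ P ⁻¹' sector α β) := by
    ext x
    simp [mem_PSector]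
  rw [this]
  exact (isOpen_iInter_of_finite fun j => isOpen_ne_fun (by fun_prop) continuous_const).inter
    (hP.isOpen_inter_preimage (isOpen_polydisk n r) (isOpen_sector α β))

theorem HasExpansionOn.congr {Q Q' F F' : (Fin n → ℂ) → ℂ} {S D : Set (Fin n → ℂ)}
    (h : HasExpansionOn γ Q F S D) (hQ : EqOn Q Q' S) (hF : EqOn F F' S) :
    HasExpansionOn γ Q' F' S D := by
  obtain ⟨g, C, A, hC, hA, han, hle, hsub⟩ := h
  exact ⟨g, C, A, hC, hA, han, hle, fun k v hv => hQ hv ▸ hF hv ▸ hsub k v hv⟩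

theorem HasExpansionOn.comp {Q F : (Fin n → ℂ) → ℂ} {S D : Set (Fin n → ℂ)}
    {S' D' : Set (Fin m → ℂ)} {φ : (Fin m → ℂ) → Fin n → ℂ} (h : HasExpansionOn γ Q F S D)
    (hD' : IsOpen D') (hφ : DifferentiableOn ℂ φ D') (hφD : MapsTo φ D' D) (hφS : MapsTo φ S' S) :
    HasExpansionOn γ (Q ∘ φ) (F ∘ φ) S' D' := by
  obtain ⟨g, C, A, hC, hA, han, hle, hsub⟩ := h
  exact ⟨fun k => g k ∘ φ, C, A, hC, hA,
    fun k => analyticOnNhd_of_differentiableOn hD' ((han k).differentiableOn.comp hφ hφD),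
    fun k v hv => hle k _ (hφD hv), fun k v hv => hsub k _ (hφS hv)⟩

/-- The chart estimates are only imposed at points with nonzero coordinates; such points are dense,
so that the estimates hold on all of `b ⁻¹' Π`. -/
theorem HasExpansionOn.preimage_PSector {ρ₀ : ℝ} {b : (Fin m → ℂ) → Fin n → ℂ} (hb : Continuous b)
    (hP : ContinuousOn P (polydisk n ρ₀)) (hf : ContinuousOn f (PSector n P α β ρ₀))
    (h : HasExpansionOn γ (P ∘ b) (f ∘ b)
      (PSector m (P ∘ b) α β r ∩ b ⁻¹' PSector n P α β ρ₀) (polydisk m r)) :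
    HasExpansionOn γ (P ∘ b) (f ∘ b) (b ⁻¹' PSector n P α β ρ₀ ∩ polydisk m r)
      (polydisk m r) := by
  obtain ⟨g, C, A, hC, hA, han, hle, hsub⟩ := h
  refine ⟨g, C, A, hC, hA, han, hle, fun k v hv => ?_⟩
  refine norm_le_mul_pow_of_dense (α := α) (β := β) (Q := P ∘ b) (h := fun v => (f ∘ b) v - g k v)
    (((isOpen_PSector hP).preimage hb).inter (isOpen_polydisk m r))
    ((hP.mono PSector_subset_polydisk).comp hb.continuousOn fun w hw => hw.1)
    ((hf.comp hb.continuousOn fun w hw => hw.1).sub ((han k).continuousOn.mono inter_subset_right))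
    (dense_forall_apply_ne_zero m) (fun w hw₀ hw hPw => ?_) v hv (mem_PSector.1 hv.1).2.2
  exact hsub k w ⟨mem_PSector.2 ⟨hw₀, hw.2, hPw⟩, hw.1⟩

end Polydisks

section RemovableSingularity

theorem two_pi_I_inv_smul_circleIntegral_sub_inv_smul_of_punctured {u : ℂ → ℂ} {R R' M : ℝ}
    (hR : R < R') (hu : DifferentiableOn ℂ u (ball 0 R' \ {0}))
    (hM : ∀ z ∈ ball (0 : ℂ) R' \ {0}, ‖u z‖ ≤ M) {t : ℂ} (ht : t ∈ ball (0 : ℂ) R) (ht₀ : t ≠ 0) :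
    (2 * π * I : ℂ)⁻¹ • ∮ ζ in C(0, R), (ζ - t)⁻¹ • u ζ = u t := by
  have hR₀ : 0 < R := pos_of_mem_ball ht
  obtain ⟨c, hc⟩ : ∃ c, DifferentiableOn ℂ (update u 0 c) (ball 0 R') :=
    ⟨_, differentiableOn_update_limUnder_of_bddAbove (ball_mem_nhds 0 (hR₀.trans hR)) hu
      ⟨M, by rintro - ⟨z, hz, rfl⟩; exact hM z hz⟩⟩
  have hcauchy := (hc.mono (closedBall_subset_ball hR)).circleIntegral_sub_inv_smul ht
  rw [update_of_ne ht₀, circleIntegral.integral_congr hR₀.le (g := fun ζ => (ζ - t)⁻¹ • u ζ)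
    fun ζ hζ => by simp only [update_of_ne (ne_of_mem_sphere hζ hR₀.ne')]] at hcauchy
  rw [hcauchy, inv_smul_smul₀ two_pi_I_ne_zero]

theorem exists_analyticOnNhd_extension_tube {n : ℕ} {h : (Fin (n + 1) → ℂ) → ℂ} {R R' r M : ℝ}
    (hR₀ : 0 < R) (hR : R < R') (hh : AnalyticOnNhd ℂ h (tube n (ball 0 R' \ {0}) r))
    (hM : ∀ v ∈ tube n (ball 0 R' \ {0}) r, ‖h v‖ ≤ M) :
    ∃ H, AnalyticOnNhd ℂ H (tube n (ball 0 R) r) ∧ EqOn H h (tube n (ball 0 R \ {0}) r) ∧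
      ∀ v ∈ tube n (ball 0 R) r, ‖H v‖ ≤ M := by
  have hsphere : sphere (0 : ℂ) R ⊆ ball 0 R' \ {0} := fun ζ hζ =>
    ⟨sphere_subset_closedBall.trans (closedBall_subset_ball hR) hζ, ne_of_mem_sphere hζ hR₀.ne'⟩
  have hne {v : Fin (n + 1) → ℂ} (hv : v ∈ tube n (ball 0 R) r) {ζ : ℂ} (hζ : ζ ∈ sphere 0 R) :
      ζ - v 0 ≠ 0 :=
    sub_ne_zero.2 fun h => (mem_ball.1 hv.1).ne (h ▸ mem_sphere.1 hζ)
  set H : (Fin (n + 1) → ℂ) → ℂ := fun v =>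
    (2 * π * I : ℂ)⁻¹ • ∮ ζ in C(0, R), (ζ - v 0)⁻¹ • h (update v 0 ζ)
  have hH : AnalyticOnNhd ℂ H (tube n (ball 0 R) r) := by
    refine analyticOnNhd_const.smul
      (analyticOnNhd_circleIntegral hR₀.le (isOpen_tube isOpen_ball r) ?_ fun ζ hζ => ?_)
    · refine ContinuousOn.smul (ContinuousOn.inv₀ (by fun_prop) fun p hp => hne hp.1 hp.2)
        (hh.continuousOn.comp (f := fun p : (Fin (n + 1) → ℂ) × ℂ => update p.1 0 p.2)
          (Continuous.continuousOn (by fun_prop)) fun p hp =>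
            update_zero_mem_tube hp.1 (hsphere hp.2))
    · refine DifferentiableOn.smul (DifferentiableOn.inv (by fun_prop) fun v hv => hne hv hζ)
        (hh.differentiableOn.comp (f := fun v : Fin (n + 1) → ℂ => update v 0 ζ)
          (differentiableOn_update differentiableOn_id (differentiableOn_const ζ) 0) fun v hv =>
            update_zero_mem_tube hv (hsphere hζ))
  have heq : EqOn H h (tube n (ball 0 R \ {0}) r) := fun v hv => by
    have hmaps : MapsTo (update v 0) (ball 0 R' \ {0}) (tube n (ball 0 R' \ {0}) r) :=
      fun ζ hζ => update_zero_mem_tube hv hζ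
    simpa only [comp_apply, update_eq_self] using
      two_pi_I_inv_smul_circleIntegral_sub_inv_smul_of_punctured (u := h ∘ update v 0) hR
      (hh.differentiableOn.comp (differentiableOn_update (differentiableOn_const v)
        differentiableOn_id 0) hmaps)
      (fun ζ hζ => hM _ (hmaps hζ)) hv.1.1 hv.1.2
  refine ⟨H, hH, heq, fun v hv => ?_⟩
  refine le_of_tendsto_of_frequently (hH v hv).continuousAt.norm
    (((mem_closure_iff_frequently.1 (dense_apply_ne_zero 0 v)).and_eventually
      ((isOpen_tube isOpen_ball r).mem_nhds hv)).mono fun w hw => ?_)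
  have hw' : w ∈ tube n (ball 0 R \ {0}) r := ⟨⟨hw.2.1, hw.1⟩, hw.2.2⟩
  rw [heq hw']
  exact hM w (tube_mono (sdiff_subset_sdiff_left (ball_subset_ball hR.le)) le_rfl hw')

theorem HasExpansionOn.of_punctured_tube {n : ℕ} {γ : ℕ → ℝ} {Q F : (Fin (n + 1) → ℂ) → ℂ}
    {S : Set (Fin (n + 1) → ℂ)} {R R' r : ℝ} (hR₀ : 0 < R) (hR : R < R')
    (hS : S ⊆ tube n (ball 0 R \ {0}) r)
    (h : HasExpansionOn γ Q F S (tube n (ball 0 R' \ {0}) r)) :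
    HasExpansionOn γ Q F S (tube n (ball 0 R) r) := by
  obtain ⟨g, C, A, hC, hA, han, hle, hsub⟩ := h
  choose G hG hGg hGle using fun k => exists_analyticOnNhd_extension_tube hR₀ hR (han k) (hle k)
  exact ⟨G, C, A, hC, hA, hG, hGle, fun k v hv => hGg k (hS hv) ▸ hsub k v hv⟩

end RemovableSingularity

section BlowUp

variable {d : ℕ}

theorem differentiable_blowUpC (d : ℕ) (ξ : ℂ) : Differentiable ℂ (blowUpC d ξ) :=
  differentiable_pi.2 fun i => by
    unfold blowUpC
    split_ifs <;> fun_prop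

theorem differentiable_blowUpInf (d : ℕ) : Differentiable ℂ (blowUpInf d) :=
  differentiable_pi.2 fun i => by
    unfold blowUpInf
    split_ifs <;> fun_prop

theorem blowUpC_zero (d : ℕ) (ξ : ℂ) : blowUpC d ξ 0 = 0 := by
  ext i
  simp [blowUpC]

theorem blowUpInf_zero (d : ℕ) : blowUpInf d 0 = 0 := by
  ext i
  simp [blowUpInf]

theorem blowUpC_apply_ne_zero {v : Fin (d + 2) → ℂ} (hv : ∀ j, v j ≠ 0) (i : Fin (d + 2)) :
    blowUpC d 0 v i ≠ 0 := by
  unfold blowUpC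
  split_ifs <;> simp [hv]

/-- The inverse `(x₁, x₂, …) ↦ (x₂ / x₁, x₁, x₃, …)` of the chart `b₀` off the hyperplane `x₁ = 0`;
on that hyperplane it takes junk values. -/
def blowUpCZeroInv (d : ℕ) (x : Fin (d + 2) → ℂ) : Fin (d + 2) → ℂ :=
  update (update x 0 (x 1 / x 0)) 1 (x 0)

/-- The coordinate change `(v₁, v₂, …) ↦ (1 / v₁, v₁ v₂, v₃, …)` from the chart `b₀` to the chart
`b_∞`, meaningful for `v₁ ≠ 0`. -/
def blowUpZeroToInf (d : ℕ) (v : Fin (d + 2) → ℂ) : Fin (d + 2) → ℂ :=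
  update (update v 0 (v 0)⁻¹) 1 (v 0 * v 1)

theorem blowUpC_blowUpCZeroInv {x : Fin (d + 2) → ℂ} (hx : x 0 ≠ 0) :
    blowUpC d 0 (blowUpCZeroInv d x) = x := by
  ext i
  unfold blowUpC
  split_ifs with h₀ h₁ <;> simp [blowUpCZeroInv, *]

theorem blowUpCZeroInv_blowUpC {v : Fin (d + 2) → ℂ} (hv : v 1 ≠ 0) :
    blowUpCZeroInv d (blowUpC d 0 v) = v := by
  ext i
  by_cases h₁ : i = 1
  · simp [blowUpCZeroInv, blowUpC, h₁]
  · by_cases h₀ : i = 0 <;> simp [blowUpCZeroInv, blowUpC, *]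

theorem blowUpC_update_sub (ξ : ℂ) (v : Fin (d + 2) → ℂ) :
    blowUpC d ξ (update v 0 (v 0 - ξ)) = blowUpC d 0 v := by
  ext i
  unfold blowUpC
  split_ifs with h₀ h₁ <;> simp [*]

theorem blowUpInf_blowUpZeroToInf {v : Fin (d + 2) → ℂ} (hv : v 0 ≠ 0) :
    blowUpInf d (blowUpZeroToInf d v) = blowUpC d 0 v := by
  ext i
  unfold blowUpInf blowUpC
  split_ifs with h₀ h₁ <;> simp [blowUpZeroToInf, *]

theorem differentiableOn_blowUpCZeroInv (d : ℕ) :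
    DifferentiableOn ℂ (blowUpCZeroInv d) {x | x 0 ≠ 0} := by
  have hdiv : DifferentiableOn ℂ (fun x : Fin (d + 2) → ℂ => x 1 / x 0) {x | x 0 ≠ 0} := by
    intro x hx
    have hx₀ : x 0 ≠ 0 := hx
    fun_prop (disch := assumption)
  exact differentiableOn_update (differentiableOn_update differentiableOn_id hdiv 0)
    (by fun_prop) 1

theorem differentiableOn_blowUpZeroToInf (d : ℕ) :
    DifferentiableOn ℂ (blowUpZeroToInf d) {v | v 0 ≠ 0} :=
  differentiableOn_update (differentiableOn_update differentiableOn_id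
    (DifferentiableOn.inv (by fun_prop) fun _ hx => hx) 0) (by fun_prop) 1

theorem blowUpCZeroInv_mem_tube {x : Fin (d + 2) → ℂ} {U : Set ℂ} {r : ℝ}
    (hx : x ∈ polydisk (d + 2) r) (hU : x 1 / x 0 ∈ U) :
    blowUpCZeroInv d x ∈ tube (d + 1) U r := by
  refine ⟨by simpa [blowUpCZeroInv] using hU, fun j hj => ?_⟩
  by_cases h₁ : j = 1
  · simpa [blowUpCZeroInv, h₁] using hx 0
  · simpa [blowUpCZeroInv, hj, h₁] using hx j

/-- The part of the domain of the chart `b₀` that corresponds to the polydisk of radius `r` in the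
chart `b_∞`. -/
def blowUpInfNhd (d : ℕ) (r : ℝ) : Set (Fin (d + 2) → ℂ) :=
  {v | v 0 ≠ 0} ∩ blowUpZeroToInf d ⁻¹' polydisk (d + 2) r

theorem isOpen_blowUpInfNhd (d : ℕ) (r : ℝ) : IsOpen (blowUpInfNhd d r) :=
  (differentiableOn_blowUpZeroToInf d).continuousOn.isOpen_inter_preimage
    (isOpen_ne_fun (by fun_prop) continuous_const) (isOpen_polydisk _ r)

theorem blowUpCZeroInv_mem_blowUpInfNhd {x : Fin (d + 2) → ℂ} {r : ℝ} (hr : 0 < r)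
    (hx : x ∈ polydisk (d + 2) r) (hx₀ : x 0 ≠ 0) (hxr : r⁻¹ < ‖x 1 / x 0‖) :
    blowUpCZeroInv d x ∈ blowUpInfNhd d r := by
  have hx₁ : x 1 / x 0 ≠ 0 := norm_pos_iff.1 ((inv_pos.2 hr).trans hxr)
  refine ⟨by simpa [blowUpCZeroInv] using hx₁, fun j => ?_⟩
  by_cases h₁ : j = 1
  · simpa [blowUpZeroToInf, blowUpCZeroInv, h₁, hx₀] using hx 1
  by_cases h₀ : j = 0
  · simpa [blowUpZeroToInf, blowUpCZeroInv, h₀] using inv_lt_of_inv_lt₀ hr hxr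
  · simpa [blowUpZeroToInf, blowUpCZeroInv, h₀, h₁] using hx j

theorem update_zero_mem_blowUpInfNhd {t : ℂ} {r : ℝ} (hr : 0 < r) (ht : r⁻¹ < ‖t‖) :
    update (0 : Fin (d + 2) → ℂ) 0 t ∈ blowUpInfNhd d r := by
  have ht₀ : t ≠ 0 := norm_pos_iff.1 ((inv_pos.2 hr).trans ht)
  refine ⟨by simpa using ht₀, fun j => ?_⟩
  by_cases h₁ : j = 1
  · simpa [blowUpZeroToInf, h₁] using hr
  by_cases h₀ : j = 0
  · simpa [blowUpZeroToInf, h₀] using inv_lt_of_inv_lt₀ hr ht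
  · simpa [blowUpZeroToInf, h₀, h₁] using hr

variable {α β ρ₀ ρ₁ r : ℝ} {γ : ℕ → ℝ} {P f : (Fin (d + 2) → ℂ) → ℂ}

theorem not_eventually_comp_blowUpC_eq_zero (hP : AnalyticOnNhd ℂ P (polydisk (d + 2) ρ₀))
    (hρ₀ : 0 < ρ₀) (hPne : ∃ x ∈ polydisk (d + 2) ρ₀, P x ≠ 0) {v : Fin (d + 2) → ℂ}
    (hv : blowUpC d 0 v ∈ polydisk (d + 2) ρ₀) : ¬∀ᶠ w in 𝓝 v, P (blowUpC d 0 w) = 0 := by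
  intro hzero
  have hmem : ∀ᶠ w in 𝓝 v, blowUpC d 0 w ∈ polydisk (d + 2) ρ₀ :=
    (differentiable_blowUpC d 0).continuous.continuousAt ((isOpen_polydisk _ _).mem_nhds hv)
  obtain ⟨w, hw₁, hw, hzero⟩ := ((mem_closure_iff_frequently.1 (dense_apply_ne_zero 1 v)
    ).and_eventually (hmem.and (eventually_eventually_nhds.2 hzero))).exists
  have hy₀ : ∀ᶠ y in 𝓝 (blowUpC d 0 w), y 0 ≠ 0 :=
    (isOpen_ne_fun (continuous_apply 0) continuous_const).mem_nhds (by simpa [blowUpC] using hw₁)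
  have hcont : ContinuousAt (blowUpCZeroInv d) (blowUpC d 0 w) :=
    (differentiableOn_blowUpCZeroInv d).continuousOn.continuousAt hy₀
  have hPzero : P =ᶠ[𝓝 (blowUpC d 0 w)] 0 := by
    rw [ContinuousAt, blowUpCZeroInv_blowUpC hw₁] at hcont
    filter_upwards [hcont.eventually hzero, hy₀] with y hy hy₀
    rwa [blowUpC_blowUpCZeroInv hy₀] at hy
  have hconn : IsPreconnected (polydisk (d + 2) ρ₀) := by
    rw [polydisk_eq_ball hρ₀]
    exact (convex_ball _ _).isPreconnected
  obtain ⟨x, hx, hPx⟩ := hPne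
  exact hPx (hP.eqOn_zero_of_preconnected_of_eventuallyEq_zero hconn hw hPzero hx)

theorem isSectorialOn_comp_blowUpC (hρ₁ : 0 < ρ₁) (hρ : ρ₁ < ρ₀)
    (hP : AnalyticOnNhd ℂ P (polydisk (d + 2) ρ₀)) (hPne : ∃ x ∈ polydisk (d + 2) ρ₀, P x ≠ 0)
    (hαβ : α < β) :
    IsSectorialOn α β (P ∘ blowUpC d 0) (blowUpC d 0 ⁻¹' PSector (d + 2) P α β ρ₀)
      (blowUpC d 0 ⁻¹' polydisk (d + 2) ρ₁) where
  lt := hαβ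
  analyticOnNhd := analyticOnNhd_of_differentiableOn
    ((isOpen_polydisk _ _).preimage (differentiable_blowUpC d 0).continuous)
    (hP.differentiableOn.comp (differentiable_blowUpC d 0).differentiableOn
      fun v hv => polydisk_mono hρ.le hv)
  exists_norm_le := by
    obtain ⟨B, hB⟩ := (isCompact_closedBall (0 : Fin (d + 2) → ℂ) ρ₁).exists_bound_of_continuousOn
      (hP.continuousOn.mono (polydisk_eq_ball (hρ₁.trans hρ) ▸ closedBall_subset_ball hρ))
    exact ⟨B, fun v hv => hB _ (ball_subset_closedBall (polydisk_eq_ball hρ₁ ▸ hv))⟩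
  not_eventually_eq_zero v hv := not_eventually_comp_blowUpC_eq_zero hP (hρ₁.trans hρ) hPne
    (polydisk_mono hρ.le hv)
  dense := (dense_forall_apply_ne_zero _).mono (ofPred_subset_ofPred.2 fun v hv hΩ hPv =>
    mem_PSector.2 ⟨blowUpC_apply_ne_zero hv, polydisk_mono hρ.le hΩ, hPv⟩)

theorem HasExpansionOn.hasExpansionNear_singleton (hρ₁ : 0 < ρ₁) {S : Set (Fin (d + 2) → ℂ)} {ξ : ℂ}
    (hr : 0 < r) (h : HasExpansionOn γ (P ∘ blowUpC d ξ) (f ∘ blowUpC d ξ)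
      (blowUpC d ξ ⁻¹' S ∩ polydisk (d + 2) r) (polydisk (d + 2) r)) :
    HasExpansionNear γ (P ∘ blowUpC d 0) (f ∘ blowUpC d 0) (blowUpC d 0 ⁻¹' S)
      (blowUpC d 0 ⁻¹' polydisk (d + 2) ρ₁) {ξ} := by
  obtain ⟨r', hr', hmaps⟩ := exists_mapsTo_polydisk (differentiable_blowUpC d ξ).continuous
    (blowUpC_zero d ξ) hρ₁
  set ε := min r r'
  have hε : 0 < ε := lt_min hr hr'
  have hshift : MapsTo (fun v => update v 0 (v 0 - ξ)) (tube (d + 1) (ball ξ ε) ε)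
      (polydisk (d + 2) ε) := fun v hv => by
    rw [polydisk_succ_eq_tube]
    exact update_zero_mem_tube hv (mem_ball_zero_iff.2 (mem_ball_iff_norm.1 hv.1))
  refine ⟨ball ξ ε, isOpen_ball, singleton_subset_iff.2 (mem_ball_self hε), ε, hε,
    fun v hv => ?_, ?_⟩
  · rw [mem_preimage, ← blowUpC_update_sub ξ]
    exact hmaps (polydisk_mono (min_le_right _ _) (hshift hv))
  · refine (h.comp (φ := fun v => update v 0 (v 0 - ξ)) (isOpen_tube isOpen_ball ε)
      (differentiableOn_update differentiableOn_id (by fun_prop) 0)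
      (fun v hv => polydisk_mono (min_le_left _ _) (hshift hv)) fun v hv => ⟨?_,
        polydisk_mono (min_le_left _ _) (hshift hv.2)⟩).congr
      (fun v _ => congrArg P (blowUpC_update_sub ξ v))
      fun v _ => congrArg f (blowUpC_update_sub ξ v)
    rw [mem_preimage, blowUpC_update_sub]
    exact hv.1

theorem HasExpansionOn.comp_blowUpC_of_comp_blowUpInf {S : Set (Fin (d + 2) → ℂ)}
    (h : HasExpansionOn γ (P ∘ blowUpInf d) (f ∘ blowUpInf d)
      (blowUpInf d ⁻¹' S ∩ polydisk (d + 2) r) (polydisk (d + 2) r)) :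
    HasExpansionOn γ (P ∘ blowUpC d 0) (f ∘ blowUpC d 0)
      (blowUpC d 0 ⁻¹' S ∩ blowUpInfNhd d r) (blowUpInfNhd d r) :=
  (h.comp (isOpen_blowUpInfNhd d r) ((differentiableOn_blowUpZeroToInf d).mono inter_subset_left)
    (fun v hv => hv.2) fun v hv => ⟨by
      rw [mem_preimage, blowUpInf_blowUpZeroToInf hv.2.1]
      exact hv.1, hv.2.2⟩).congr
    (fun v hv => congrArg P (blowUpInf_blowUpZeroToInf hv.2.1))
    fun v hv => congrArg f (blowUpInf_blowUpZeroToInf hv.2.1)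

theorem exists_hasExpansionOn_blowUpCZeroInv_mem {Q F : (Fin (d + 2) → ℂ) → ℂ}
    {S Ω : Set (Fin (d + 2) → ℂ)} (hQ : IsSectorialOn α β Q S Ω) (hγ : ∀ k, 0 < γ k)
    (hlocal : ∀ t, HasExpansionNear γ Q F S Ω {t}) (hr : 0 < r) (hrΩ : blowUpInfNhd d r ⊆ Ω)
    (hinf : HasExpansionOn γ Q F (S ∩ blowUpInfNhd d r) (blowUpInfNhd d r)) :
    ∃ D, HasExpansionOn γ Q F (S ∩ D) D ∧
      ∃ ρ > 0, ∀ x ∈ polydisk (d + 2) ρ, x 0 ≠ 0 → blowUpCZeroInv d x ∈ D := by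
  set T := r⁻¹ + 1
  have hT : r⁻¹ < T := lt_add_one _
  obtain ⟨U, hU, hTU, r₁, hr₁, hΩ₁, hfin⟩ := hasExpansionNear_of_isCompact hQ hγ hlocal
    (isCompact_closedBall 0 T)
  have hsphere : closedBall (0 : ℂ) T ∩ (ball 0 T)ᶜ = sphere 0 T := by
    rw [← sdiff_eq, closedBall_sdiff_ball]
  have hD₁ : IsOpen (tube (d + 1) U r₁) := isOpen_tube hU r₁
  have hD₂ := isOpen_blowUpInfNhd d r
  obtain ⟨V, hV, hTV, r₂, hr₂, hVD⟩ := exists_tube_subset (isCompact_sphere (0 : ℂ) T)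
    (hD₁.inter hD₂) fun t ht => ⟨update_zero_mem_tube (U := {0})
      ⟨rfl, fun j _ => by simpa using hr₁⟩ (hTU (sphere_subset_closedBall ht)),
      update_zero_mem_blowUpInfNhd hr ((mem_sphere_zero_iff_norm.1 ht).symm ▸ hT)⟩
  obtain ⟨S₁, S₂, -, -, hTS₁, hTS₂, r₃, hr₃, hexp⟩ := hfin.exists_merge hQ hγ hD₁ hD₂ hΩ₁ hrΩ
    hinf isClosed_closedBall isOpen_ball.isClosed_compl (hsphere ▸ isCompact_sphere 0 T) hV
    (hsphere ▸ hTV) hr₂ hVD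
  refine ⟨_, hexp, min r (min r₁ r₃), lt_min hr (lt_min hr₁ hr₃), fun x hx hx₀ => ?_⟩
  have hxr := polydisk_mono (min_le_left _ _) hx
  have hxr₁ := polydisk_mono ((min_le_right _ _).trans (min_le_left _ _)) hx
  have hxr₃ := polydisk_mono ((min_le_right _ _).trans (min_le_right _ _)) hx
  by_cases hxT : x 1 / x 0 ∈ ball 0 T
  · have hxT' := ball_subset_closedBall hxT
    exact .inl ⟨blowUpCZeroInv_mem_tube hxr₁ (hTU hxT'), blowUpCZeroInv_mem_tube hxr₃ (hTS₁ hxT')⟩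
  · exact .inr ⟨blowUpCZeroInv_mem_blowUpInfNhd hr hxr hx₀
      (hT.trans_le (by simpa using hxT)), blowUpCZeroInv_mem_tube hxr₃ (hTS₂ hxT)⟩

theorem HasExpansionOn.exists_of_blowUpC {S D : Set (Fin (d + 2) → ℂ)} {ρ : ℝ} (hρ : 0 < ρ)
    (hS : ∀ x ∈ S, x 0 ≠ 0)
    (hD : ∀ x ∈ polydisk (d + 2) ρ, x 0 ≠ 0 → blowUpCZeroInv d x ∈ D)
    (h : HasExpansionOn γ (P ∘ blowUpC d 0) (f ∘ blowUpC d 0) (blowUpC d 0 ⁻¹' S ∩ D) D) :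
    ∃ ρ > 0, HasExpansionOn γ P f (S ∩ polydisk (d + 2) ρ) (polydisk (d + 2) ρ) := by
  refine ⟨ρ / 2, half_pos hρ, ?_⟩
  have hmaps : MapsTo (blowUpCZeroInv d) (tube (d + 1) (ball 0 ρ \ {0}) (ρ / 2)) D := fun x hx =>
    hD x (polydisk_succ_eq_tube ρ ▸ tube_mono sdiff_subset (half_le_self hρ.le) hx) hx.1.2
  have hsub : S ∩ polydisk (d + 2) (ρ / 2) ⊆ tube (d + 1) (ball 0 (ρ / 2) \ {0}) (ρ / 2) :=
    fun x hx => ⟨⟨mem_ball_zero_iff.2 (hx.2 0), hS x hx.1⟩, fun j _ => hx.2 j⟩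
  rw [polydisk_succ_eq_tube] at hsub ⊢
  refine HasExpansionOn.of_punctured_tube (half_pos hρ) (half_lt_self hρ) hsub ?_
  have hinv {x : Fin (d + 2) → ℂ} (hx : x ∈ S) := blowUpC_blowUpCZeroInv (hS x hx)
  refine (h.comp (isOpen_tube (isOpen_ball.sdiff isClosed_singleton) _)
    ((differentiableOn_blowUpCZeroInv d).mono fun x hx => hx.1.2) hmaps fun x hx => ⟨?_, ?_⟩).congr
    (fun x hx => congrArg P (hinv hx.1)) fun x hx => congrArg f (hinv hx.1)
  · rw [mem_preimage, hinv hx.1]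
    exact hx.1
  · exact hmaps (tube_mono (sdiff_subset_sdiff_left (ball_subset_ball (half_le_self hρ.le)))
      le_rfl (hsub hx))

end BlowUp

section Characterization

variable {d m n : ℕ} {α β ρ₀ : ℝ} {γ : ℕ → ℝ}

theorem HasExpansionOn.exists_comp {P f : (Fin n → ℂ) → ℂ} {S : Set (Fin n → ℂ)} {ρ : ℝ}
    {b : (Fin m → ℂ) → Fin n → ℂ} (hb : Differentiable ℂ b) (hb₀ : b 0 = 0) (hρ₀ : 0 < ρ₀)
    (hρ : 0 < ρ) (h : HasExpansionOn γ P f (S ∩ polydisk n ρ) (polydisk n ρ)) :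
    ∃ r > 0, (∀ v ∈ polydisk m r, b v ∈ polydisk n ρ₀) ∧
      HasExpansionOn γ (P ∘ b) (f ∘ b) (PSector m (P ∘ b) α β r ∩ b ⁻¹' S) (polydisk m r) := by
  obtain ⟨r, hr, hmaps⟩ := exists_mapsTo_polydisk hb.continuous hb₀ (lt_min hρ₀ hρ)
  have hmapsρ : MapsTo b (polydisk m r) (polydisk n ρ) :=
    fun v hv => polydisk_mono (min_le_right _ _) (hmaps hv)
  exact ⟨r, hr, fun v hv => polydisk_mono (min_le_left _ _) (hmaps hv),
    h.comp (isOpen_polydisk m r) hb.differentiableOn hmapsρ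
      fun v hv => ⟨hv.2, hmapsρ (PSector_subset_polydisk hv.1)⟩⟩

variable {P f : (Fin (d + 2) → ℂ) → ℂ}

theorem exists_hasExpansionOn_of_blowUp (hγ : ∀ k, 0 < γ k) (hρ₀ : 0 < ρ₀)
    (hP : AnalyticOnNhd ℂ P (polydisk (d + 2) ρ₀)) (hPne : ∃ x ∈ polydisk (d + 2) ρ₀, P x ≠ 0)
    (hαβ : α < β)
    (hfin : ∀ ξ, ∃ r > 0, HasExpansionOn γ (P ∘ blowUpC d ξ) (f ∘ blowUpC d ξ)
      (blowUpC d ξ ⁻¹' PSector (d + 2) P α β ρ₀ ∩ polydisk (d + 2) r) (polydisk (d + 2) r))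
    (hinf : ∃ r > 0, HasExpansionOn γ (P ∘ blowUpInf d) (f ∘ blowUpInf d)
      (blowUpInf d ⁻¹' PSector (d + 2) P α β ρ₀ ∩ polydisk (d + 2) r) (polydisk (d + 2) r)) :
    ∃ ρ > 0, HasExpansionOn γ P f (PSector (d + 2) P α β ρ₀ ∩ polydisk (d + 2) ρ)
      (polydisk (d + 2) ρ) := by
  have hρ₁ : 0 < ρ₀ / 2 := half_pos hρ₀
  obtain ⟨r, hr, hinf⟩ := hinf
  obtain ⟨r', hr', hmaps⟩ := exists_mapsTo_polydisk (differentiable_blowUpInf d).continuous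
    (blowUpInf_zero d) hρ₁
  have hsub : polydisk (d + 2) (min r r') ⊆ polydisk (d + 2) r := polydisk_mono (min_le_left _ _)
  have hΩ : blowUpInfNhd d (min r r') ⊆ blowUpC d 0 ⁻¹' polydisk (d + 2) (ρ₀ / 2) := fun v hv => by
    rw [mem_preimage, ← blowUpInf_blowUpZeroToInf hv.1]
    exact hmaps (polydisk_mono (min_le_right _ _) hv.2)
  obtain ⟨D, hexp, ρ, hρ, hD⟩ := exists_hasExpansionOn_blowUpCZeroInv_mem
    (isSectorialOn_comp_blowUpC hρ₁ (half_lt_self hρ₀) hP hPne hαβ) hγ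
    (fun ξ => (hfin ξ).elim fun r h => h.2.hasExpansionNear_singleton hρ₁ h.1)
    (lt_min hr hr') hΩ
    (hinf.mono (inter_subset_inter_right _ hsub) hsub).comp_blowUpC_of_comp_blowUpInf
  exact hexp.exists_of_blowUpC hρ (fun x hx => (mem_PSector.1 hx).1 0) hD

theorem Gevrey_asymptotics_blow_up_characterization_general (hγ : ∀ k, 0 < γ k) (hρ₀ : 0 < ρ₀)
    (hP : AnalyticOnNhd ℂ P (polydisk (d + 2) ρ₀)) (hPne : ∃ x ∈ polydisk (d + 2) ρ₀, P x ≠ 0)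
    (hαβ : α < β) (hf : ContinuousOn f (PSector (d + 2) P α β ρ₀)) :
    (∃ ρ > 0, HasExpansionOn γ P f (PSector (d + 2) P α β ρ₀ ∩ polydisk (d + 2) ρ)
      (polydisk (d + 2) ρ)) ↔
    (∀ ξ, ∃ r > 0, (∀ v ∈ polydisk (d + 2) r, blowUpC d ξ v ∈ polydisk (d + 2) ρ₀) ∧
      HasExpansionOn γ (P ∘ blowUpC d ξ) (f ∘ blowUpC d ξ)
        (PSector (d + 2) (P ∘ blowUpC d ξ) α β r ∩ blowUpC d ξ ⁻¹' PSector (d + 2) P α β ρ₀)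
        (polydisk (d + 2) r)) ∧
    ∃ r > 0, (∀ v ∈ polydisk (d + 2) r, blowUpInf d v ∈ polydisk (d + 2) ρ₀) ∧
      HasExpansionOn γ (P ∘ blowUpInf d) (f ∘ blowUpInf d)
        (PSector (d + 2) (P ∘ blowUpInf d) α β r ∩ blowUpInf d ⁻¹' PSector (d + 2) P α β ρ₀)
        (polydisk (d + 2) r) := by
  refine ⟨fun ⟨ρ, hρ, h⟩ => ⟨fun ξ => ?_, ?_⟩, fun ⟨hfin, r, hr, _, hinf⟩ => ?_⟩
  · exact h.exists_comp (differentiable_blowUpC d ξ) (blowUpC_zero d ξ) hρ₀ hρ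
  · exact h.exists_comp (differentiable_blowUpInf d) (blowUpInf_zero d) hρ₀ hρ
  · refine exists_hasExpansionOn_of_blowUp hγ hρ₀ hP hPne hαβ (fun ξ => ?_)
      ⟨r, hr, hinf.preimage_PSector (differentiable_blowUpInf d).continuous hP.continuousOn hf⟩
    obtain ⟨r, hr, -, h⟩ := hfin ξ
    exact ⟨r, hr, h.preimage_PSector (differentiable_blowUpC d ξ).continuous hP.continuousOn hf⟩

end Characterization

/-- **Blow-up characterization of Gevrey asymptotics** (Proposition 7.5).
A holomorphic `f` on a `P`-sector admits a `P`-`s`-Gevrey asymptotic expansion in the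
estimate sense if and only if for every chart `ξ ∈ ℂ ∪ {∞}` of the blow-up, `f ∘ b_ξ`
admits a `(P∘b_ξ)`-`s`-Gevrey asymptotic expansion in the estimate sense. -/
theorem Gevrey_asymptotics_blow_up_characterization
    (d : ℕ) (s : ℝ) (hs : 0 < s) (ρ₀ : ℝ) (hρ₀ : 0 < ρ₀)
    (P : (Fin (d + 2) → ℂ) → ℂ) (hP : AnalyticOnNhd ℂ P (polydisk (d + 2) ρ₀))
    (hP0 : P 0 = 0) (hPne : ∃ x ∈ polydisk (d + 2) ρ₀, P x ≠ 0)
    (α β : ℝ) (hαβ : α < β) (h2π : β ≤ α + 2 * Real.pi)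
    (f : (Fin (d + 2) → ℂ) → ℂ)
    (hf : AnalyticOnNhd ℂ f (PSector (d + 2) P α β ρ₀)) :
    (∃ ρ > 0, ∃ fn : ℕ → (Fin (d + 2) → ℂ) → ℂ, ∃ K A : ℝ, 0 < K ∧ 0 < A ∧
      (∀ n, AnalyticOnNhd ℂ (fn n) (polydisk (d + 2) ρ)) ∧
      (∀ n : ℕ, ∀ x ∈ polydisk (d + 2) ρ,
        ‖fn n x‖ ≤ K * A ^ n * Real.Gamma (s * n + 1)) ∧
      (∀ n : ℕ, ∀ x ∈ PSector (d + 2) P α β ρ₀ ∩ polydisk (d + 2) ρ,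
        ‖f x - fn n x‖ ≤
          K * A ^ n * Real.Gamma (s * n + 1) * ‖P x‖ ^ n)) ↔
    ((∀ ξ : ℂ, ∃ rξ > 0,
        (∀ v ∈ polydisk (d + 2) rξ, blowUpC d ξ v ∈ polydisk (d + 2) ρ₀) ∧
        ∃ g : ℕ → (Fin (d + 2) → ℂ) → ℂ, ∃ C A : ℝ, 0 < C ∧ 0 < A ∧
          (∀ n, AnalyticOnNhd ℂ (g n) (polydisk (d + 2) rξ)) ∧
          (∀ n : ℕ, ∀ v ∈ polydisk (d + 2) rξ,
            ‖g n v‖ ≤ C * A ^ n * Real.Gamma (s * n + 1)) ∧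
          (∀ n : ℕ, ∀ v ∈ PSector (d + 2) (fun w => P (blowUpC d ξ w)) α β rξ,
            blowUpC d ξ v ∈ PSector (d + 2) P α β ρ₀ →
            ‖f (blowUpC d ξ v) - g n v‖ ≤
              C * A ^ n * Real.Gamma (s * n + 1) *
                ‖P (blowUpC d ξ v)‖ ^ n)) ∧
      (∃ rI > 0,
        (∀ v ∈ polydisk (d + 2) rI, blowUpInf d v ∈ polydisk (d + 2) ρ₀) ∧
        ∃ g : ℕ → (Fin (d + 2) → ℂ) → ℂ, ∃ C A : ℝ, 0 < C ∧ 0 < A ∧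
          (∀ n, AnalyticOnNhd ℂ (g n) (polydisk (d + 2) rI)) ∧
          (∀ n : ℕ, ∀ v ∈ polydisk (d + 2) rI,
            ‖g n v‖ ≤ C * A ^ n * Real.Gamma (s * n + 1)) ∧
          (∀ n : ℕ, ∀ v ∈ PSector (d + 2) (fun w => P (blowUpInf d w)) α β rI,
            blowUpInf d v ∈ PSector (d + 2) P α β ρ₀ →
            ‖f (blowUpInf d v) - g n v‖ ≤
              C * A ^ n * Real.Gamma (s * n + 1) *
                ‖P (blowUpInf d v)‖ ^ n))) := by
  simpa only [HasExpansionOn, mem_inter_iff, mem_preimage, and_imp, comp_def] using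
    Gevrey_asymptotics_blow_up_characterization_general (γ := fun n => Real.Gamma (s * n + 1))
      (fun n => Real.Gamma_pos_of_pos (by positivity)) hρ₀ hP hPne hαβ hf.continuousOn
end
end

section
/- Exponential smallness of functions P-s-Gevrey asymptotic to zero (Lemma 7.13): Let d ≥ 1, s > 0, P holomorphic on D(0;R) with P(0) = 0 and P not identically zero, and Π = Π_P(θ_1,θ_2;R) a P-sector. Suppose f : Π → ℂ is holomorphic and there exist ρ > 0 and constants K, A > 0 such that |f(x)| ≤ K·A^N·Γ(sN+1)·|P(x)|^N for every N ∈ ℕ and every x ∈ Π ∩ D(0;ρ). Then there exist constants C, B > 0 such that |f(x)| ≤ C·exp(−B/|P(x)|^{1/s}) for all x ∈ Π ∩ D(0;ρ). -/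
open Set Complex

noncomputable section

/-!
Optimal truncation: the hypothesis holds for every `N`, so one may choose `N` depending on `x`.
Put `u = A ‖P x‖` and `w = u ^ (-1/s)`. The bound `Γ(y + 1) ≤ a ^ y * exp (-y) / (1 - y / a)`,
taken at `y = s N` and `a = w`, has its factor `w ^ (s N)` cancelled exactly by `u ^ N`, leaving a
constant multiple of `exp (-s N)`. Taking `s N` within `s` of `c w`, for a fixed `c < 1`, turns
this into the asserted exponential in `-‖P x‖ ^ (-1/s)`.
-/

lemma rpow_le_exp_mul_sub_one {x y : ℝ} (hx : 0 ≤ x) (hy : 0 ≤ y) :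
    y ^ x ≤ Real.exp (x * (y - 1)) := by
  have hexp : y ≤ Real.exp (y - 1) := by linarith [Real.add_one_le_exp (y - 1)]
  calc y ^ x ≤ Real.exp (y - 1) ^ x := Real.rpow_le_rpow hy hexp hx
    _ = Real.exp (x * (y - 1)) := by rw [← Real.exp_mul, mul_comm]

lemma exp_neg_mul_rpow_le {a r x : ℝ} (ha : 0 < a) (hr : 0 ≤ r) (hx : 0 ≤ x) :
    Real.exp (-r) * r ^ x ≤ a ^ x * Real.exp (-x) * Real.exp (-(1 - x / a) * r) := by
  have hscale : r ^ x = a ^ x * (r / a) ^ x := by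
    rw [← Real.mul_rpow ha.le (by positivity), mul_div_cancel₀ r ha.ne']
  calc Real.exp (-r) * r ^ x
      ≤ Real.exp (-r) * (a ^ x * Real.exp (x * (r / a - 1))) := by
        rw [hscale]
        gcongr
        exact rpow_le_exp_mul_sub_one hx (by positivity)
    _ = a ^ x * Real.exp (-x) * Real.exp (-(1 - x / a) * r) := by
        rw [mul_left_comm, mul_assoc, ← Real.exp_add, ← Real.exp_add]
        ring_nf

lemma Gamma_add_one_le_rpow_mul_exp_neg_div {a x : ℝ} (hx : 0 ≤ x) (hxa : x < a) :
    Real.Gamma (x + 1) ≤ a ^ x * Real.exp (-x) / (1 - x / a) := by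
  have ha : 0 < a := hx.trans_lt hxa
  have hrate : -(1 - x / a) < 0 := by linarith [(div_lt_one ha).2 hxa]
  calc Real.Gamma (x + 1)
      = ∫ r in Ioi 0, Real.exp (-r) * r ^ x := by
        rw [Real.Gamma_eq_integral (by positivity), add_sub_cancel_right]
    _ ≤ ∫ r in Ioi 0, a ^ x * Real.exp (-x) * Real.exp (-(1 - x / a) * r) := by
        refine MeasureTheory.setIntegral_mono_on ?_
          ((integrableOn_exp_mul_Ioi hrate 0).const_mul _) measurableSet_Ioi
          fun r hr ↦ exp_neg_mul_rpow_le ha (le_of_lt hr) hx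
        simpa only [add_sub_cancel_right] using
          Real.GammaIntegral_convergent (s := x + 1) (by positivity)
    _ = a ^ x * Real.exp (-x) / (1 - x / a) := by
        rw [MeasureTheory.integral_const_mul, integral_exp_mul_Ioi hrate 0, mul_zero,
          Real.exp_zero, neg_div_neg_eq, mul_one_div]

lemma pow_mul_Gamma_le_exp_neg_div {s u c : ℝ} (hs : 0 < s) (hu : 0 < u) (hc : c < 1) {N : ℕ}
    (hN : s * N ≤ c * u ^ (-(1 / s))) :
    u ^ N * Real.Gamma (s * N + 1) ≤ Real.exp (-(s * N)) / (1 - c) := by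
  set w := u ^ (-(1 / s)) with hw_def
  have hw : 0 < w := by positivity
  have hsN_lt : s * N < w := hN.trans_lt (mul_lt_of_lt_one_left hw hc)
  have hcancel : u ^ N * w ^ (s * N) = 1 := by
    have hexponent : (N : ℝ) + -(1 / s) * (s * N) = 0 := by field_simp; ring
    rw [hw_def, ← Real.rpow_mul hu.le, ← Real.rpow_natCast, ← Real.rpow_add hu, hexponent,
      Real.rpow_zero]
  calc u ^ N * Real.Gamma (s * N + 1)
      ≤ u ^ N * (w ^ (s * N) * Real.exp (-(s * N)) / (1 - s * N / w)) := by
        gcongr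
        exact Gamma_add_one_le_rpow_mul_exp_neg_div (by positivity) hsN_lt
    _ = Real.exp (-(s * N)) / (1 - s * N / w) := by
        rw [mul_div_assoc, ← mul_assoc, hcancel, one_mul]
    _ ≤ Real.exp (-(s * N)) / (1 - c) := by
        have hratio : s * N / w ≤ c := (div_le_iff₀ hw).2 hN
        have : 0 < 1 - c := sub_pos.2 hc
        gcongr

lemma exists_pow_mul_Gamma_le_exp_neg_rpow {s u c : ℝ} (hs : 0 < s) (hu : 0 < u) (hc₀ : 0 ≤ c)
    (hc₁ : c < 1) :
    ∃ N : ℕ, u ^ N * Real.Gamma (s * N + 1) ≤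
      Real.exp s / (1 - c) * Real.exp (-c * u ^ (-(1 / s))) := by
  set w := u ^ (-(1 / s))
  set N := ⌊c * w / s⌋₊
  have hN_le : s * N ≤ c * w := by
    rw [mul_comm, ← le_div_iff₀ hs]
    exact Nat.floor_le (by positivity)
  have hN_gt : c * w < s * N + s := by
    have := (div_lt_iff₀ hs).1 (Nat.lt_floor_add_one (c * w / s))
    linarith
  have : 0 < 1 - c := sub_pos.2 hc₁
  refine ⟨N, ?_⟩
  calc u ^ N * Real.Gamma (s * N + 1)
      ≤ Real.exp (-(s * N)) / (1 - c) := pow_mul_Gamma_le_exp_neg_div hs hu hc₁ hN_le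
    _ ≤ Real.exp (s + -c * w) / (1 - c) := by
        gcongr
        linarith
    _ = Real.exp s / (1 - c) * Real.exp (-c * w) := by
        rw [Real.exp_add, mul_div_right_comm]

theorem exponential_smallness_of_Gevrey_flat_functions_general
    {X E F : Type*} [SeminormedAddGroup E] [NormedAddGroup F] {S : Set X} {f : X → E} {P : X → F}
    {s K A B : ℝ} (hs : 0 < s) (hK : 0 < K) (hA : 0 < A) (hB : 0 < B) (hBA : B < A ^ (-(1 / s)))
    (hP : ∀ x ∈ S, P x ≠ 0)
    (hf : ∀ N : ℕ, ∀ x ∈ S, ‖f x‖ ≤ K * A ^ N * Real.Gamma (s * N + 1) * ‖P x‖ ^ N) :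
    ∃ C > 0, ∀ x ∈ S, ‖f x‖ ≤ C * Real.exp (-B / ‖P x‖ ^ (1 / s)) := by
  have hA' : 0 < A ^ (-(1 / s)) := by positivity
  set c := B / A ^ (-(1 / s)) with hc_def
  have hc₁ : c < 1 := (div_lt_one hA').2 hBA
  have : 0 < 1 - c := sub_pos.2 hc₁
  refine ⟨K * (Real.exp s / (1 - c)), by positivity, fun x hx ↦ ?_⟩
  have hPx : 0 < ‖P x‖ := norm_pos_iff.2 (hP x hx)
  obtain ⟨N, hN⟩ := exists_pow_mul_Gamma_le_exp_neg_rpow hs (mul_pos hA hPx) (by positivity) hc₁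
  have hexponent : -c * (A * ‖P x‖) ^ (-(1 / s)) = -B / ‖P x‖ ^ (1 / s) := by
    rw [Real.mul_rpow hA.le hPx.le, ← mul_assoc, hc_def, neg_mul, div_mul_cancel₀ B hA'.ne',
      Real.rpow_neg hPx.le, ← div_eq_mul_inv]
  calc ‖f x‖ ≤ K * A ^ N * Real.Gamma (s * N + 1) * ‖P x‖ ^ N := hf N x hx
    _ = K * ((A * ‖P x‖) ^ N * Real.Gamma (s * N + 1)) := by ring
    _ ≤ K * (Real.exp s / (1 - c) * Real.exp (-B / ‖P x‖ ^ (1 / s))) := by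
        rw [← hexponent]
        gcongr
    _ = K * (Real.exp s / (1 - c)) * Real.exp (-B / ‖P x‖ ^ (1 / s)) := (mul_assoc ..).symm

/-- **Exponential smallness of functions `P`-`s`-Gevrey asymptotic to zero** (Lemma 7.13).
If `|f(x)| ≤ K·A^N·Γ(sN+1)·|P(x)|^N` for all `N` on a `P`-sector near `0`, then
`|f(x)| ≤ C·exp(−B/|P(x)|^{1/s})` there. -/
theorem exponential_smallness_of_Gevrey_flat_functions
    (d : ℕ) (hd : 1 ≤ d) (s : ℝ) (hs : 0 < s) (R : ℝ) (hR : 0 < R)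
    (P : (Fin d → ℂ) → ℂ) (hP : AnalyticOnNhd ℂ P (polydisk d R))
    (hP0 : P 0 = 0) (hPne : ∃ x ∈ polydisk d R, P x ≠ 0)
    (θ₁ θ₂ : ℝ) (hθ : θ₁ < θ₂) (hθ2 : θ₂ ≤ θ₁ + 2 * Real.pi)
    (f : (Fin d → ℂ) → ℂ) (hf : AnalyticOnNhd ℂ f (PSector d P θ₁ θ₂ R))
    (ρ : ℝ) (hρ : 0 < ρ) (K A : ℝ) (hK : 0 < K) (hA : 0 < A)
    (hest : ∀ N : ℕ, ∀ x ∈ PSector d P θ₁ θ₂ R ∩ polydisk d ρ,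
      ‖f x‖ ≤
        K * A ^ N * Real.Gamma (s * N + 1) * ‖P x‖ ^ N) :
    ∃ C > 0, ∃ B > 0, ∀ x ∈ PSector d P θ₁ θ₂ R ∩ polydisk d ρ,
      ‖f x‖ ≤ C * Real.exp (-B / ‖P x‖ ^ (1 / s)) := by
  have hA' : 0 < A ^ (-(1 / s)) := by positivity
  obtain ⟨C, hC, hbound⟩ := exponential_smallness_of_Gevrey_flat_functions_general hs hK hA
    (half_pos hA') (half_lt_self hA') (fun x hx ↦ hx.1.2.1) hest
  exact ⟨C, hC, _, half_pos hA', hbound⟩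
end
end
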